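/- For every d ≥ 2 there exist dimensional constants ā_d, b̄_d, ρ_d, ε̄_d ∈ (0,1) with the following property: for all Borel sets E, F ⊆ [0,1]^d and every s ≥ d − ε̄_d, if min{H^s_∞(E), H^s_∞(F)} ≥ 1 − ρ_d, then the distance set satisfies Δ(E,F) ⊇ [ā_d, b̄_d]. -/

import Mathlib

open MeasureTheory Set Metric Filter
open scoped ENNReal NNReal Topology

noncomputable section

abbrev Euc (d : ℕ) : Type := EuclideanSpace ℝ (Fin d)

/-- The closed unit cube `[0,1]^d`. -/
def unitCube (d : ℕ) : Set (Euc d) := {x | ∀ i, x i ∈ Icc (0:ℝ) 1}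

/-- The distance set `Δ(E,F) = {|x-y| : x ∈ E, y ∈ F}`. -/
def distSet {d : ℕ} (E F : Set (Euc d)) : Set ℝ :=
  {t | ∃ x ∈ E, ∃ y ∈ F, dist x y = t}

/-- `Q` is a dyadic cube of side length `l`, i.e. `Q = 2^{-k}(m + [0,1]^d)`. -/
def IsDyadicCube {d : ℕ} (Q : Set (Euc d)) (l : ℝ) : Prop :=
  ∃ (k : ℤ) (m : Fin d → ℤ), l = (2:ℝ) ^ (-k) ∧
    Q = {x | ∀ i, (m i : ℝ) * (2:ℝ) ^ (-k) ≤ x i ∧ x i ≤ ((m i : ℝ) + 1) * (2:ℝ) ^ (-k)}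

/-- The `s`-dimensional dyadic Hausdorff content: the infimum of `∑ ℓ(Q_i)^s` over
countable covers of `E` by dyadic cubes. -/
def dyadicContent {d : ℕ} (s : ℝ) (E : Set (Euc d)) : ℝ≥0∞ :=
  ⨅ (Q : ℕ → Set (Euc d)) (l : ℕ → ℝ) (_ : ∀ i, IsDyadicCube (Q i) (l i))
    (_ : E ⊆ ⋃ i, Q i), ∑' i, ENNReal.ofReal (l i ^ s)

namespace DistPf

section tree
variable {α β : Type*}

def cvr (c : ℕ → α → β) (A : Set α) (C : Set (ℕ × β)) : Prop := ∀ x ∈ A, ∃ k, (k, c k x) ∈ C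

def wt (v : ℝ≥0∞) (C : Set (ℕ × β)) : ℝ≥0∞ := ∑' q : ℕ × β, C.indicator (fun q => v ^ q.1) q

def hc (c : ℕ → α → β) (v : ℝ≥0∞) (A : Set α) : ℝ≥0∞ :=
  ⨅ (C : Set (ℕ × β)) (_ : cvr c A C), wt v C

lemma hc_le {c : ℕ → α → β} {v : ℝ≥0∞} {A : Set α} {C : Set (ℕ × β)} (h : cvr c A C) :
    hc c v A ≤ wt v C := iInf₂_le C h

def mx (c : ℕ → α → β) (C : Set (ℕ × β)) : Set (ℕ × β) :=
  {q | q ∈ C ∧ ∀ x, c q.1 x = q.2 → ∀ k < q.1, (k, c k x) ∉ C}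

def Nested (c : ℕ → α → β) : Prop := ∀ k j x y, k ≤ j → c j x = c j y → c k x = c k y

lemma mx_level {c : ℕ → α → β} (hc' : Nested c) {C : Set (ℕ × β)} {x : α} {k : ℕ}
    (h : (k, c k x) ∈ C) : ∃ k' ≤ k, (k', c k' x) ∈ mx c C := by
  classical
  have hex : ∃ k, (k, c k x) ∈ C := ⟨k, h⟩
  refine ⟨Nat.find hex, Nat.find_min' hex h, Nat.find_spec hex, ?_⟩
  intro y hy j hj
  have := hc' j _ y x hj.le hy
  rw [this]
  exact Nat.find_min hex hj

def Dseq (c : ℕ → α → β) (C : ℕ → Set (ℕ × β)) : ℕ → Set (ℕ × β)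
  | 0 => C 0
  | n + 1 => mx c (Dseq c C n ∪ C (n + 1))

lemma wt_step {c : ℕ → α → β} (v : ℝ≥0∞) {A A' : Set α} (hA : A ⊆ A')
    {D C : Set (ℕ × β)} (hD : cvr c A D) (hC : cvr c A' C) :
    wt v (mx c (D ∪ C)) + hc c v A ≤ wt v D + wt v C := by
  classical
  set N : Set (ℕ × β) := {q | (q ∈ D ∪ C ∧ q ∉ mx c (D ∪ C)) ∨ (q ∈ D ∧ q ∈ C)} with hN
  have hcov : cvr c A N := by
    intro x hx
    obtain ⟨k, hk⟩ := hD x hx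
    obtain ⟨j, hj⟩ := hC x (hA hx)
    rcases lt_trichotomy k j with h | h | h
    · refine ⟨j, Or.inl ⟨Or.inr hj, fun hm => hm.2 x rfl k h (Or.inl hk)⟩⟩
    · subst h; exact ⟨k, Or.inr ⟨hk, hj⟩⟩
    · refine ⟨k, Or.inl ⟨Or.inl hk, fun hm => hm.2 x rfl j h (Or.inr hj)⟩⟩
  refine (add_le_add le_rfl (hc_le hcov)).trans ?_
  unfold wt
  rw [← ENNReal.tsum_add, ← ENNReal.tsum_add]
  refine ENNReal.tsum_le_tsum fun q => ?_
  have hsub : q ∈ mx c (D ∪ C) → q ∈ D ∪ C := fun h => h.1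
  simp only [Set.indicator_apply, hN, mem_ofPred_eq]
  by_cases h1 : q ∈ D <;> by_cases h2 : q ∈ C <;> by_cases h3 : q ∈ mx c (D ∪ C) <;>
    simp [h1, h2, h3] <;> simp_all

lemma hc_iUnion_le {c : ℕ → α → β} (hn : Nested c) (v : ℝ≥0∞) {A : ℕ → Set α} (hA : Monotone A)
    {L : ℝ≥0∞} (hL : L ≠ ⊤) (h : ∀ n, hc c v (A n) ≤ L) : hc c v (⋃ n, A n) ≤ L := by
  classical
  refine ENNReal.le_of_forall_pos_le_add fun η hη _ => ?_
  obtain ⟨e, he0, hes⟩ := ENNReal.exists_pos_sum_of_countable (ε := (η : ℝ≥0∞))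
    (by exact_mod_cast hη.ne') ℕ
  have hex : ∀ n, ∃ C, cvr c (A n) C ∧ wt v C ≤ hc c v (A n) + e n := by
    intro n
    have hlt : hc c v (A n) < hc c v (A n) + e n :=
      ENNReal.lt_add_right (ne_top_of_le_ne_top hL (h n)) (by exact_mod_cast (he0 n).ne')
    have : ∃ C, ∃ _ : cvr c (A n) C, wt v C < hc c v (A n) + e n := by
      simpa only [hc, iInf_lt_iff] using hlt
    obtain ⟨C, h1, h2⟩ := this
    exact ⟨C, h1, h2.le⟩
  choose C hC1 hC2 using hex
  set D := Dseq c C with hDdef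
  have hDc : ∀ n, cvr c (A n) (D n) := by
    intro n
    cases n with
    | zero => exact hC1 0
    | succ n =>
      intro x hx
      obtain ⟨k, hk⟩ := hC1 (n+1) x hx
      obtain ⟨k', -, hk'⟩ := mx_level hn (C := D n ∪ C (n+1)) (Or.inr hk)
      exact ⟨k', hk'⟩
  have hDs : ∀ n, wt v (D n) ≤ hc c v (A n) + ∑ i ∈ Finset.range (n+1), (e i : ℝ≥0∞) := by
    intro n
    induction n with
    | zero =>
      have := hC2 0
      simpa [hDdef, Dseq] using this
    | succ n ih =>
      have h1 := wt_step v (hA (Nat.le_succ n)) (hDc n) (hC1 (n+1))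
      have h2 := h1.trans (add_le_add ih (hC2 (n+1)))
      have hfin : hc c v (A n) ≠ ⊤ := ne_top_of_le_ne_top hL (h n)
      rw [Finset.sum_range_succ _ (n+1)]
      have h3 : wt v (D (n+1)) + hc c v (A n) ≤
        (hc c v (A (n+1)) + (∑ i ∈ Finset.range (n+1), (e i : ℝ≥0∞) + e (n+1))) + hc c v (A n) := by
        refine h2.trans (le_of_eq ?_)
        ring
      exact (ENNReal.add_le_add_iff_right hfin).1 h3
  have hDs' : ∀ n, wt v (D n) ≤ L + η := fun n => (hDs n).trans
    (add_le_add (h n) ((ENNReal.sum_le_tsum _).trans hes.le))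
  set Di : Set (ℕ × β) := {q | ∀ᶠ n in atTop, q ∈ D n} with hDi
  have hcov : cvr c (⋃ n, A n) Di := by
    intro x hx
    obtain ⟨n0, hn0⟩ := mem_iUnion.1 hx
    have hex : ∃ k, ∃ n ≥ n0, (k, c k x) ∈ D n := by
      obtain ⟨k, hk⟩ := hDc n0 x hn0
      exact ⟨k, n0, le_rfl, hk⟩
    obtain ⟨n1, hn1, hk1⟩ := Nat.find_spec hex
    refine ⟨Nat.find hex, ?_⟩
    refine eventually_atTop.2 ⟨n1, fun n hn' => ?_⟩
    induction n, hn' using Nat.le_induction with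
    | base => exact hk1
    | succ n hle ih =>
      obtain ⟨k', hk'1, hk'2⟩ := mx_level hn (C := D n ∪ C (n+1)) (Or.inl ih)
      have : Nat.find hex ≤ k' := Nat.find_min' hex ⟨n+1, by omega, hk'2⟩
      have heq : k' = Nat.find hex := le_antisymm hk'1 this
      rw [heq] at hk'2
      exact hk'2
  refine (hc_le hcov).trans ?_
  unfold wt
  rw [ENNReal.tsum_eq_iSup_sum]
  refine iSup_le fun s => ?_
  have hev : ∀ᶠ n in atTop, ∀ q ∈ s, q ∈ Di → q ∈ D n := by
    rw [Filter.eventually_all_finset]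
    intro q _
    by_cases hq : q ∈ Di
    · filter_upwards [hq] with n hn _ using hn
    · exact Eventually.of_forall fun n h => absurd h hq
  obtain ⟨n, hn'⟩ := hev.exists
  refine le_trans ?_ (hDs' n)
  refine le_trans (Finset.sum_le_sum fun q hq => ?_) (ENNReal.sum_le_tsum s)
  simp only [Set.indicator_apply]
  by_cases h1 : q ∈ Di
  · simp [h1, hn' q hq h1]
  · simp [h1]

/-- finite Frostman lemma -/
lemma frostman [DecidableEq β] {c : ℕ → α → β} (hn : Nested c) {r : ℝ} (hr0 : 0 < r) (N : ℕ)
    {A : Set α} (hfin : (c N '' A).Finite) :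
    ∃ (S : Finset α) (w : α → ℝ), (∀ x ∈ S, x ∈ A) ∧ (∀ x, 0 ≤ w x) ∧
      (∀ k ≤ N, ∀ b, ∑ x ∈ S with c k x = b, w x ≤ r ^ k) ∧
      hc c (ENNReal.ofReal r) A ≤ ENNReal.ofReal (∑ x ∈ S, w x) := by
  classical
  -- representatives
  obtain ⟨S, hSA, hSc⟩ : ∃ S : Finset α, (∀ x ∈ S, x ∈ A) ∧ ∀ a ∈ A, ∃ x ∈ S, c N x = c N a := by
    have : ∀ b ∈ c N '' A, ∃ x ∈ A, c N x = b := fun b hb => hb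
    choose g hg1 hg2 using this
    refine ⟨hfin.toFinset.attach.image (fun b => g b.1 (hfin.mem_toFinset.1 b.2)), ?_, ?_⟩
    · intro x hx
      obtain ⟨b, hb, rfl⟩ := Finset.mem_image.1 hx
      exact hg1 _ _
    · intro a ha
      refine ⟨g (c N a) ⟨a, ha, rfl⟩, Finset.mem_image.2 ⟨⟨c N a, hfin.mem_toFinset.2 ⟨a, ha, rfl⟩⟩,
        Finset.mem_attach _ _, rfl⟩, hg2 _ ⟨a, ha, rfl⟩⟩
  -- maximise
  let K : Set (S → ℝ) := {w | (∀ x, 0 ≤ w x) ∧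
    ∀ k ≤ N, ∀ b, ∑ x ∈ Finset.univ.filter (fun x : S => c k x.1 = b), w x ≤ r ^ k}
  have hKc : IsClosed K := by
    have h1 : IsClosed {w : S → ℝ | ∀ x, 0 ≤ w x} := by
      simp only [ofPred_forall]
      exact isClosed_iInter fun x => isClosed_le continuous_const (continuous_apply x)
    have h2 : IsClosed {w : S → ℝ | ∀ k ≤ N, ∀ b, ∑ x ∈ Finset.univ.filter (fun x : S => c k x.1 = b), w x ≤ r ^ k} := by
      simp only [ofPred_forall]
      refine isClosed_iInter fun k => isClosed_iInter fun _ => isClosed_iInter fun b => ?_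
      exact isClosed_le (by fun_prop) continuous_const
    exact h1.inter h2
  have hKcomp : IsCompact K := by
    refine (isCompact_univ_pi (fun _ : S => isCompact_Icc (a := (0:ℝ)) (b := 1))).of_isClosed_subset
      hKc ?_
    intro w hw x _
    refine ⟨hw.1 x, ?_⟩
    have := hw.2 0 (Nat.zero_le _) (c 0 x)
    rw [pow_zero] at this
    refine le_trans ?_ this
    exact Finset.single_le_sum (f := w) (fun i _ => hw.1 i) (by simp)
  have hKne : K.Nonempty := ⟨fun _ => 0, fun _ => le_rfl, fun k _ b => by simp; positivity⟩
  obtain ⟨w, hwK, hwmax⟩ := hKcomp.exists_isMaxOn hKne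
    (f := fun w : S → ℝ => ∑ x, w x) (by fun_prop)
  -- tightness
  have htight : ∀ x : S, ∃ k, k ≤ N ∧ ∑ y ∈ Finset.univ.filter (fun y : S => c k y.1 = c k x.1), w y = r ^ k := by
    intro x
    by_contra hcon
    push Not at hcon
    have hlt : ∀ k ∈ Finset.range (N+1), 0 < r ^ k - ∑ y ∈ Finset.univ.filter (fun y : S => c k y.1 = c k x.1), w y := by
      intro k hk
      have hk' : k ≤ N := by simpa [Nat.lt_succ_iff] using hk
      have := lt_of_le_of_ne (hwK.2 k hk' (c k x)) (hcon k hk')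
      linarith
    obtain ⟨δ, hδ0, hδ⟩ : ∃ δ > 0, ∀ k ∈ Finset.range (N+1),
        δ ≤ r ^ k - ∑ y ∈ Finset.univ.filter (fun y : S => c k y.1 = c k x.1), w y := by
      refine ⟨(Finset.range (N+1)).inf' Finset.nonempty_range_add_one
        (fun k => r ^ k - ∑ y ∈ Finset.univ.filter (fun y : S => c k y.1 = c k x.1), w y), ?_, ?_⟩
      · exact (Finset.lt_inf'_iff _).2 hlt
      · intro k hk; exact Finset.inf'_le _ hk
    have hw' : (w + Pi.single x δ) ∈ K := by
      refine ⟨fun y => ?_, fun k hk b => ?_⟩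
      · simp only [Pi.add_apply]
        have : 0 ≤ (Pi.single x δ : S → ℝ) y := by
          by_cases h : y = x
          · subst h; simp [hδ0.le]
          · simp [h]
        linarith [hwK.1 y]
      · simp only [Pi.add_apply, Finset.sum_add_distrib]
        by_cases hb : c k x = b
        · have := hδ k (by simp; omega)
          rw [hb] at this
          have h2 : ∑ y ∈ Finset.univ.filter (fun y : S => c k y.1 = b), (Pi.single x δ : S → ℝ) y = δ := by
            rw [Finset.sum_pi_single']; simp [hb]
          rw [h2]; linarith
        · have h2 : ∑ y ∈ Finset.univ.filter (fun y : S => c k y.1 = b), (Pi.single x δ : S → ℝ) y = 0 := by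
            rw [Finset.sum_pi_single']; simp [hb]
          rw [h2, add_zero]; exact hwK.2 k hk b
    have := isMaxOn_iff.1 hwmax _ hw'
    simp only [Pi.add_apply, Finset.sum_add_distrib] at this
    rw [Finset.sum_pi_single'] at this
    simp at this
    linarith
  let κ : S → ℕ := fun x => Nat.find (htight x)
  have hκ1 : ∀ x, κ x ≤ N := fun x => (Nat.find_spec (htight x)).1
  have hκ2 : ∀ x : S, ∑ y ∈ Finset.univ.filter (fun y : S => c (κ x) y.1 = c (κ x) x.1), w y = r ^ (κ x) :=
    fun x => (Nat.find_spec (htight x)).2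
  have hκ3 : ∀ x y : S, c (κ x) y = c (κ x) x → κ y = κ x := by
    have key : ∀ x y : S, c (κ x) y = c (κ x) x → κ y ≤ κ x := by
      intro x y hxy
      refine Nat.find_min' _ ⟨hκ1 x, ?_⟩
      rw [hxy]; exact hκ2 x
    intro x y hxy
    refine le_antisymm (key x y hxy) ?_
    refine key y x ?_
    exact (hn _ _ _ _ (key x y hxy) hxy).symm
  let φ : S → ℕ × β := fun x => (κ x, c (κ x) x)
  have hcov : cvr c A (Finset.univ.image φ : Finset (ℕ × β)) := by
    intro a ha
    obtain ⟨x, hx, hxa⟩ := hSc a ha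
    refine ⟨κ ⟨x, hx⟩, ?_⟩
    rw [Finset.mem_coe, Finset.mem_image]
    exact ⟨⟨x, hx⟩, Finset.mem_univ _, Prod.ext rfl (hn _ _ _ _ (hκ1 _) hxa)⟩
  have hsum : ∑ q ∈ Finset.univ.image φ, r ^ q.1 = ∑ x, w x := by
    rw [← Finset.sum_fiberwise_of_maps_to (s := Finset.univ) (t := Finset.univ.image φ) (g := φ)
      (fun x _ => Finset.mem_image_of_mem _ (Finset.mem_univ _))]
    refine Finset.sum_congr rfl fun q hq => ?_
    obtain ⟨x, -, rfl⟩ := Finset.mem_image.1 hq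
    rw [← hκ2 x]
    refine Finset.sum_congr ?_ fun _ _ => rfl
    ext y
    simp only [Finset.mem_filter, Finset.mem_univ, true_and, φ, Prod.mk.injEq]
    constructor
    · intro h
      have := hκ3 x y h
      exact ⟨this, by rw [this]; exact h⟩
    · rintro ⟨h1, h2⟩
      rw [h1] at h2; exact h2
  refine ⟨S, fun x => if h : x ∈ S then w ⟨x, h⟩ else 0, hSA, ?_, ?_, ?_⟩
  · intro x
    by_cases h : x ∈ S
    · simp only [h, dite_true]; exact hwK.1 _
    · simp [h]
  · intro k hk b
    refine le_trans (le_of_eq ?_) (hwK.2 k hk b)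
    rw [Finset.sum_filter, Finset.sum_filter, ← Finset.sum_attach S]
    refine Finset.sum_congr rfl fun x _ => ?_
    simp
  · have e1 : ∑ x ∈ S, (if h : x ∈ S then w ⟨x, h⟩ else 0) = ∑ x, w x := by
      rw [← Finset.sum_attach S]
      refine Finset.sum_congr rfl fun x _ => ?_
      simp
    rw [e1, ← hsum]
    refine (hc_le hcov).trans (le_of_eq ?_)
    unfold wt
    rw [ENNReal.ofReal_sum_of_nonneg (fun _ _ => by positivity)]
    rw [tsum_eq_sum (s := Finset.univ.image φ)]
    · refine Finset.sum_congr rfl fun q hq => ?_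
      rw [Set.indicator_of_mem (by exact_mod_cast hq), ENNReal.ofReal_pow hr0.le]
    · intro q hq
      exact Set.indicator_of_notMem (by exact_mod_cast hq) _

end tree
end DistPf

namespace DistPf

def cell {d : ℕ} (k : ℕ) (x : Euc d) : Fin d → ℕ := fun i => min ⌊(2:ℝ) ^ k * x i⌋₊ (2 ^ k - 1)

lemma cell_half {d : ℕ} (k : ℕ) (x : Euc d) (i : Fin d) : cell k x i = cell (k+1) x i / 2 := by
  have h : ⌊(2:ℝ) ^ k * x i⌋₊ = ⌊(2:ℝ) ^ (k+1) * x i⌋₊ / 2 := by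
    rw [← Nat.floor_div_natCast]
    congr 1
    push_cast
    ring
  have hp : 2 ^ (k+1) = 2 * 2 ^ k := by ring
  have hp1 : 1 ≤ 2 ^ k := Nat.one_le_two_pow
  simp only [cell, h, hp]
  omega

lemma cell_nested {d : ℕ} : Nested (cell (d := d)) := by
  intro k j x y hkj
  induction j, hkj using Nat.le_induction with
  | base => exact id
  | succ j _ ih =>
    intro h
    apply ih
    funext i
    rw [cell_half j x, cell_half j y, h]

lemma cell_lt {d : ℕ} (k : ℕ) (x : Euc d) (i : Fin d) : cell k x i < 2 ^ k := by
  have hp1 : 1 ≤ 2 ^ k := Nat.one_le_two_pow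
  simp only [cell]; omega

lemma cell_bounds {d : ℕ} (k : ℕ) {x : Euc d} (hx : x ∈ unitCube d) (i : Fin d) :
    (cell k x i : ℝ) ≤ 2 ^ k * x i ∧ 2 ^ k * x i ≤ cell k x i + 1 := by
  have h0 := (hx i).1
  have h1 := (hx i).2
  have hp : (0:ℝ) < 2 ^ k := by positivity
  have hf : (⌊(2:ℝ) ^ k * x i⌋₊ : ℝ) ≤ 2 ^ k * x i := Nat.floor_le (by positivity)
  have hf2 := Nat.lt_floor_add_one ((2:ℝ) ^ k * x i)
  have hp1 : 1 ≤ 2 ^ k := Nat.one_le_two_pow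
  have hc : ((2 ^ k - 1 : ℕ) : ℝ) = 2 ^ k - 1 := by push_cast [hp1]; ring
  simp only [cell, Nat.cast_min, hc]
  refine ⟨(min_le_left _ _).trans hf, ?_⟩
  rcases min_choice (⌊(2:ℝ) ^ k * x i⌋₊ : ℝ) (2 ^ k - 1) with h | h <;> rw [h]
  · exact hf2.le
  · nlinarith

lemma cell_diam {d : ℕ} (k : ℕ) {x y : Euc d} (hx : x ∈ unitCube d) (hy : y ∈ unitCube d)
    (h : cell k x = cell k y) : ‖x - y‖ ≤ d * (1/2) ^ k := by
  have hp : (0:ℝ) < 2 ^ k := by positivity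
  have hi : ∀ i, |x i - y i| ≤ (1/2) ^ k := by
    intro i
    have h1 := cell_bounds k hx i
    have h2 := cell_bounds k hy i
    rw [h] at h1
    have : (2:ℝ)^k * |x i - y i| ≤ 1 := by
      rw [← abs_of_pos hp, ← abs_mul, abs_le]
      constructor <;> nlinarith
    rw [one_div, inv_pow]
    rw [← one_div, le_div_iff₀ hp]
    linarith
  calc ‖x - y‖ = ‖∑ i, EuclideanSpace.single i ((x - y) i)‖ := by
        congr 1
        ext j
        simp [Finset.sum_apply, Pi.single_apply]
    _ ≤ ∑ i, ‖EuclideanSpace.single i ((x - y) i)‖ := norm_sum_le _ _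
    _ ≤ ∑ i : Fin d, (1/2:ℝ) ^ k := by
        refine Finset.sum_le_sum fun i _ => ?_
        simpa using hi i
    _ = d * (1/2) ^ k := by simp

lemma content_le {d : ℕ} {s s' : ℝ} (hs' : 0 < s') (hss : s' ≤ s) {A : Set (Euc d)}
    (hA : A ⊆ unitCube d) (hd : 0 < d) :
    dyadicContent s A ≤ hc cell (ENNReal.ofReal ((2:ℝ) ^ (-s'))) A := by
  classical
  have _ : Nonempty (Fin d) := ⟨⟨0, hd⟩⟩
  refine le_iInf₂ fun C hC => ?_
  refine ENNReal.le_of_forall_pos_le_add fun η hη _ => ?_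
  obtain ⟨⟨e⟩⟩ : Nonempty (Nonempty (ℕ ≃ ℕ × (Fin d → ℕ))) := by
    obtain ⟨D⟩ := nonempty_denumerable (ℕ × (Fin d → ℕ))
    exact ⟨⟨(Denumerable.eqv _).symm⟩⟩
  obtain ⟨η', hη0, hηs⟩ := ENNReal.exists_pos_sum_of_countable (ε := (η : ℝ≥0∞))
    (by exact_mod_cast hη.ne') ℕ
  have hr1 : (2:ℝ) ^ (-s') < 1 := Real.rpow_lt_one_of_one_lt_of_neg (by norm_num) (by linarith)
  have hr0 : 0 < (2:ℝ) ^ (-s') := by positivity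
  have hpow : ∀ k : ℕ, ((2:ℝ) ^ (-(k:ℤ))) ^ s ≤ ((2:ℝ) ^ (-s')) ^ k := by
    intro k
    rw [← Real.rpow_intCast, ← Real.rpow_natCast, ← Real.rpow_mul (by norm_num),
      ← Real.rpow_mul (by norm_num)]
    apply Real.rpow_le_rpow_of_exponent_le (by norm_num)
    push_cast
    have : (0:ℝ) ≤ k := by positivity
    nlinarith
  have hK : ∀ n, ∃ K : ℕ, ((2:ℝ) ^ (-s')) ^ K < η' n := fun n =>
    exists_pow_lt_of_lt_one (by exact_mod_cast hη0 n) hr1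
  choose K hK using hK
  let lev : ℕ → ℕ := fun n => if e n ∈ C then (e n).1 else K n
  let ind : ℕ → Fin d → ℤ := fun n i => (e n).2 i
  let Q : ℕ → Set (Euc d) := fun n => {x | ∀ i, (ind n i : ℝ) * (2:ℝ) ^ (-(lev n : ℤ)) ≤ x i ∧
    x i ≤ ((ind n i : ℝ) + 1) * (2:ℝ) ^ (-(lev n : ℤ))}
  let l : ℕ → ℝ := fun n => (2:ℝ) ^ (-(lev n : ℤ))
  have hQ : ∀ n, IsDyadicCube (Q n) (l n) := fun n => ⟨lev n, ind n, rfl, rfl⟩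
  have hcov : A ⊆ ⋃ n, Q n := by
    intro x hx
    obtain ⟨k, hk⟩ := hC x hx
    refine mem_iUnion.2 ⟨e.symm (k, cell k x), ?_⟩
    intro i
    have hlev : lev (e.symm (k, cell k x)) = k := by simp [lev, hk]
    have hind : ind (e.symm (k, cell k x)) i = cell k x i := by simp [ind]
    rw [hlev, hind]
    have hb := cell_bounds k (hA hx) i
    have hp : (0:ℝ) < 2 ^ k := by positivity
    rw [zpow_neg, zpow_natCast]
    rw [← div_eq_mul_inv, ← div_eq_mul_inv, div_le_iff₀ hp, le_div_iff₀ hp]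
    push_cast
    constructor <;> linarith [hb.1, hb.2]
  refine (iInf₂_le_of_le Q l (iInf₂_le_of_le hQ hcov le_rfl)).trans ?_
  have hterm : ∀ n, ENNReal.ofReal (l n ^ s) ≤
      C.indicator (fun q => ENNReal.ofReal ((2:ℝ) ^ (-s')) ^ q.1) (e n) + η' n := by
    intro n
    have h1 : l n ^ s ≤ ((2:ℝ) ^ (-s')) ^ (lev n) := hpow (lev n)
    by_cases h : e n ∈ C
    · rw [Set.indicator_of_mem h, ← ENNReal.ofReal_pow hr0.le]
      refine le_trans ?_ le_self_add
      apply ENNReal.ofReal_le_ofReal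
      simpa [lev, h] using h1
    · rw [Set.indicator_of_notMem h, zero_add]
      have h2 : l n ^ s ≤ η' n := by
        refine h1.trans ?_
        simp only [lev, h, if_false]
        exact (hK n).le
      calc ENNReal.ofReal (l n ^ s) ≤ ENNReal.ofReal (η' n) := ENNReal.ofReal_le_ofReal h2
        _ = η' n := by simp
  calc ∑' n, ENNReal.ofReal (l n ^ s) ≤ ∑' n,
      (C.indicator (fun q => ENNReal.ofReal ((2:ℝ) ^ (-s')) ^ q.1) (e n) + η' n) :=
        ENNReal.tsum_le_tsum hterm
    _ = wt (ENNReal.ofReal ((2:ℝ) ^ (-s'))) C + ∑' n, (η' n : ℝ≥0∞) := by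
        rw [ENNReal.tsum_add]
        congr 1
        exact e.tsum_eq (C.indicator (fun q => ENNReal.ofReal ((2:ℝ) ^ (-s')) ^ q.1))
    _ ≤ _ := by gcongr

/-- weighted point systems obeying a Frostman condition -/
structure Sys (d N : ℕ) (s : ℝ) (S : Finset (Euc d)) (w : Euc d → ℝ) : Prop where
  mem : ∀ x ∈ S, x ∈ unitCube d
  nn : ∀ x, 0 ≤ w x
  le : ∀ k ≤ N, ∀ b, ∑ x ∈ S with cell k x = b, w x ≤ ((2:ℝ) ^ (-s)) ^ k

lemma Sys.ball {d N : ℕ} {s : ℝ} {S : Finset (Euc d)} {w : Euc d → ℝ} (h : Sys d N s S w)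
    (hs0 : 0 ≤ s) (hsd : s ≤ d) {τ : ℝ} (hτN : (1/2)^N ≤ τ) (hτ1 : τ ≤ 1) (x : Euc d)
    (T : Finset (Euc d)) (hT : T ⊆ S) (hTx : ∀ p ∈ T, ‖x - p‖ < τ) :
    ∑ p ∈ T, w p ≤ 6 ^ d * τ ^ s := by
  classical
  have hτ0 : 0 < τ := lt_of_lt_of_le (by positivity) hτN
  obtain ⟨k, hk1, hk2⟩ := exists_nat_pow_near_of_lt_one hτ0 hτ1 (y := (1/2:ℝ)) (by norm_num)
    (by norm_num)
  have hkN : k ≤ N := by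
    by_contra hcon
    push Not at hcon
    have : (1/2:ℝ)^k < (1/2)^N := pow_lt_pow_right_of_lt_one₀ (by norm_num) (by norm_num) hcon
    linarith
  have hp : (0:ℝ) < 2 ^ k := by positivity
  have hkτ : 2 ^ k * τ ≤ 1 := by
    rw [one_div, inv_pow, ← one_div, le_div_iff₀ hp] at hk2; linarith
  let u : Fin d → ℕ := fun i => ⌊(2:ℝ) ^ k * x i - 1⌋₊
  let b : (Fin d → Fin 3) → (Fin d → ℕ) := fun e i => min (u i + (e i : ℕ)) (2 ^ k - 1)
  have hcell : ∀ p ∈ T, ∃ e, cell k p = b e := by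
    intro p hpT
    have hpc := h.mem p (hT hpT)
    have : ∀ i, ∃ e : Fin 3, ⌊(2:ℝ) ^ k * p i⌋₊ = u i + (e : ℕ) := by
      intro i
      have hxi : |x i - p i| < τ := by
        have h1 : ‖(x - p) i‖ ≤ ‖x - p‖ := PiLp.norm_apply_le _ i
        have h2 := hTx p hpT
        rw [Real.norm_eq_abs] at h1
        exact lt_of_le_of_lt (by simpa using h1) h2
      rw [abs_lt] at hxi
      have hlow : u i ≤ ⌊(2:ℝ) ^ k * p i⌋₊ := by
        apply Nat.floor_mono
        nlinarith
      have hup : ⌊(2:ℝ) ^ k * p i⌋₊ < u i + 3 := by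
        rw [Nat.floor_lt (by have := (hpc i).1; positivity)]
        have := Nat.lt_floor_add_one ((2:ℝ) ^ k * x i - 1)
        push_cast
        simp only [u]
        nlinarith
      refine ⟨⟨⌊(2:ℝ) ^ k * p i⌋₊ - u i, by omega⟩, ?_⟩
      simp only
      omega
    choose e he using this
    refine ⟨e, ?_⟩
    funext i
    simp only [cell, b, he]
  calc ∑ p ∈ T, w p ≤ ∑ p ∈ T, ∑ e : Fin d → Fin 3, (if cell k p = b e then w p else 0) := by
        refine Finset.sum_le_sum fun p hpT => ?_
        obtain ⟨e, he⟩ := hcell p hpT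
        refine le_trans ?_ (Finset.single_le_sum
          (f := fun e => if cell k p = b e then w p else 0) (fun e _ => ?_) (Finset.mem_univ e))
        · simp [he]
        · split_ifs
          · exact h.nn p
          · exact le_rfl
    _ = ∑ e : Fin d → Fin 3, ∑ p ∈ T, (if cell k p = b e then w p else 0) := Finset.sum_comm
    _ ≤ ∑ e : Fin d → Fin 3, ((2:ℝ) ^ (-s)) ^ k := by
        refine Finset.sum_le_sum fun e _ => ?_
        refine le_trans ?_ (h.le k hkN (b e))
        rw [Finset.sum_filter]
        refine Finset.sum_le_sum_of_subset_of_nonneg hT fun p _ _ => ?_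
        split_ifs
        · exact h.nn p
        · exact le_rfl
    _ = 3 ^ d * ((2:ℝ) ^ (-s)) ^ k := by simp
    _ ≤ 3 ^ d * (2 ^ d * τ ^ s) := by
        gcongr
        have e1 : ((2:ℝ) ^ (-s)) ^ k = ((1/2:ℝ)^k) ^ s := by
          rw [← Real.rpow_natCast, ← Real.rpow_natCast, ← Real.rpow_mul (by norm_num),
            ← Real.rpow_mul (by norm_num), one_div, Real.inv_rpow (by norm_num),
            ← Real.rpow_neg (by norm_num)]
          congr 1; ring
        rw [e1]
        have e2 : (1/2:ℝ)^k ≤ 2 * τ := by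
          have : (1/2:ℝ)^(k+1) = (1/2)^k / 2 := by ring
          linarith
        calc ((1/2:ℝ)^k) ^ s ≤ (2 * τ) ^ s := Real.rpow_le_rpow (by positivity) e2 hs0
          _ = 2 ^ s * τ ^ s := Real.mul_rpow (by norm_num) hτ0.le
          _ ≤ 2 ^ d * τ ^ s := by
            gcongr
            rw [← Real.rpow_natCast]
            exact Real.rpow_le_rpow_of_exponent_le (by norm_num) hsd
    _ = 6 ^ d * τ ^ s := by rw [← mul_assoc, ← mul_pow]; norm_num

lemma Sys.cell_mass {d N : ℕ} {s : ℝ} {S : Finset (Euc d)} {w : Euc d → ℝ} (h : Sys d N s S w)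
    {k : ℕ} (hk : k ≤ N) {x : Euc d} :
    ∑ p ∈ S, w p - ((2:ℝ) ^ (k * d) - 1) * ((2:ℝ) ^ (-s)) ^ k ≤
      ∑ p ∈ S with cell k p = cell k x, w p := by
  classical
  have hmem : ∀ p : Euc d, cell k p ∈ Fintype.piFinset (fun _ : Fin d => Finset.range (2 ^ k)) := by
    intro p
    rw [Fintype.mem_piFinset]
    intro i
    simpa using cell_lt k p i
  have h1 := Finset.sum_fiberwise_of_maps_to (s := S)
    (t := Fintype.piFinset (fun _ : Fin d => Finset.range (2 ^ k))) (g := cell k)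
    (fun p _ => hmem p) w
  rw [← h1, ← Finset.add_sum_erase _ _ (hmem x)]
  have h2 : ∑ b ∈ (Fintype.piFinset (fun _ : Fin d => Finset.range (2 ^ k))).erase (cell k x),
      ∑ p ∈ S with cell k p = b, w p ≤ ((2:ℝ) ^ (k * d) - 1) * ((2:ℝ) ^ (-s)) ^ k := by
    refine (Finset.sum_le_card_nsmul _ _ _ (fun b _ => h.le k hk b)).trans (le_of_eq ?_)
    rw [Finset.card_erase_of_mem (hmem x), nsmul_eq_mul]
    congr 1
    simp only [Fintype.card_piFinset, Finset.card_range, Finset.prod_const, Finset.card_univ,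
      Fintype.card_fin]
    rw [Nat.cast_sub (Nat.one_le_pow _ _ (by positivity))]
    push_cast
    rw [pow_mul]
  linarith

end DistPf

namespace DistPf

def sph (d : ℕ) : Measure (Euc d) :=
  ((volume : Measure (Euc d)).restrict (ball 0 1)).map (fun z => ‖z‖⁻¹ • z)

lemma meas_nrm (d : ℕ) : Measurable (fun z : Euc d => ‖z‖⁻¹ • z) :=
  (measurable_norm.inv).smul measurable_id

instance (d : ℕ) : IsFiniteMeasure (sph d) := by
  have : IsFiniteMeasure ((volume : Measure (Euc d)).restrict (ball 0 1)) :=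
    ⟨by rw [Measure.restrict_apply_univ]; exact measure_ball_lt_top⟩
  unfold sph
  infer_instance

lemma sph_univ_pos (d : ℕ) : 0 < (sph d).real univ := by
  rw [measureReal_def, sph, Measure.map_apply (meas_nrm d) MeasurableSet.univ, preimage_univ,
    Measure.restrict_apply_univ]
  exact ENNReal.toReal_pos (measure_ball_pos _ _ one_pos).ne' measure_ball_lt_top.ne

lemma sph_norm (d : ℕ) (hd : 0 < d) : ∀ᵐ θ ∂(sph d), ‖θ‖ = 1 := by
  have _ : Nonempty (Fin d) := ⟨⟨0, hd⟩⟩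
  rw [sph, ae_map_iff (meas_nrm d).aemeasurable (measurableSet_eq_fun measurable_norm measurable_const)]
  apply ae_restrict_of_ae
  have h : ∀ᵐ z : Euc d, z ≠ 0 := by
    rw [ae_iff]; simp
  filter_upwards [h] with z hz
  exact norm_smul_inv_norm hz

lemma sph_map (d : ℕ) (R : Euc d ≃ₗᵢ[ℝ] Euc d) : (sph d).map R = sph d := by
  rw [sph, Measure.map_map R.continuous.measurable (meas_nrm d)]
  have h1 : (R ∘ fun z : Euc d => ‖z‖⁻¹ • z) = (fun z : Euc d => ‖z‖⁻¹ • z) ∘ R := by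
    funext z; simp
  rw [h1, ← Measure.map_map (meas_nrm d) R.continuous.measurable]
  congr 1
  have h2 : R ⁻¹' (ball 0 1) = ball 0 1 := by
    ext z; simp
  conv_lhs => rw [← h2]
  exact (R.measurePreserving.restrict_preimage measurableSet_ball).map_eq

lemma slab_coord (d : ℕ) (i : Fin d) {l : ℝ} (hl : 0 < l) :
    volume ((ball 0 1 : Set (Euc d)) ∩ {z | |z i| < l}) ≤ ENNReal.ofReal (2 ^ d * l) := by
  classical
  have hsub : ((ball 0 1 : Set (Euc d)) ∩ {z | |z i| < l}) ⊆
      WithLp.ofLp ⁻¹' (Set.univ.pi (fun k => if k = i then Ioo (-l) l else Icc (-1:ℝ) 1)) := by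
    rintro z ⟨hz, hzi⟩ k -
    by_cases hk : k = i
    · subst hk
      simpa [abs_lt] using hzi
    · simp only [hk, if_false]
      have h1 : ‖z k‖ ≤ ‖z‖ := PiLp.norm_apply_le _ k
      rw [mem_ball_zero_iff] at hz
      rw [Real.norm_eq_abs] at h1
      exact abs_le.1 (h1.trans hz.le)
  refine (measure_mono hsub).trans ?_
  rw [(PiLp.volume_preserving_ofLp (Fin d)).measure_preimage]
  · rw [volume_pi_pi]
    have : ∀ k : Fin d, volume (if k = i then Ioo (-l) l else Icc (-1:ℝ) 1) =
        ENNReal.ofReal (2 * (if k = i then l else 1)) := by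
      intro k
      split_ifs
      · rw [Real.volume_Ioo]; congr 1; ring
      · rw [Real.volume_Icc]; congr 1; ring
    simp only [this]
    rw [← ENNReal.ofReal_prod_of_nonneg (fun k _ => by split_ifs <;> positivity)]
    rw [Finset.prod_mul_distrib]
    simp
  · refine (MeasurableSet.univ_pi fun k => ?_).nullMeasurableSet
    split_ifs
    · exact measurableSet_Ioo
    · exact measurableSet_Icc

lemma slab_unit (d : ℕ) (hd : 0 < d) (e : Euc d) (he : ‖e‖ = 1) {l : ℝ} (hl : 0 < l) :
    sph d {θ | |inner ℝ e θ| < l} ≤ ENNReal.ofReal (2 ^ d * l) := by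
  classical
  let i : Fin d := ⟨0, hd⟩
  have hms : MeasurableSet {θ : Euc d | |inner ℝ e θ| < l} :=
    (isOpen_lt (by fun_prop) continuous_const).measurableSet
  rw [sph, Measure.map_apply (meas_nrm d) hms, Measure.restrict_apply ((meas_nrm d) hms)]
  let R := (ℝ ∙ (e - EuclideanSpace.single i (1:ℝ)))ᗮ.reflection
  have hR : R e = EuclideanSpace.single i (1:ℝ) := Submodule.reflection_sub (by simp [he])
  have hsub : ((fun z : Euc d => ‖z‖⁻¹ • z) ⁻¹' {θ | |inner ℝ e θ| < l}) ∩ ball 0 1 ⊆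
      R ⁻¹' ((ball 0 1 : Set (Euc d)) ∩ {z | |z i| < l}) := by
    rintro z ⟨hz1, hz2⟩
    refine ⟨by simpa using hz2, ?_⟩
    have h1 : (R z) i = inner ℝ e z := by
      rw [← R.inner_map_map e z, hR, EuclideanSpace.inner_single_left]; simp
    simp only [mem_ofPred_eq] at hz1 ⊢
    simp only [mem_preimage, mem_ofPred_eq] at hz1
    rw [h1]
    rw [mem_ball_zero_iff] at hz2
    by_cases hz : z = 0
    · simp [hz, hl]
    · have hzp : 0 < ‖z‖ := norm_pos_iff.2 hz
      rw [inner_smul_right, abs_mul, abs_of_pos (inv_pos.2 hzp)] at hz1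
      rw [inv_mul_lt_iff₀ hzp] at hz1
      nlinarith
  refine (measure_mono hsub).trans ?_
  rw [R.measurePreserving.measure_preimage]
  · exact slab_coord d i hl
  · exact (measurableSet_ball.inter
      (isOpen_lt (by fun_prop) continuous_const).measurableSet).nullMeasurableSet

lemma slab_vec (d : ℕ) (hd : 0 < d) (u : Euc d) {q : ℝ} (hq : 0 < q) (hu : q ≤ ‖u‖) :
    sph d {θ | |inner ℝ u θ| < q ^ 2} ≤ ENNReal.ofReal (2 ^ d * q) := by
  have hup : 0 < ‖u‖ := hq.trans_le hu
  refine le_trans (measure_mono ?_) (slab_unit d hd (‖u‖⁻¹ • u)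
    (norm_smul_inv_norm (norm_pos_iff.1 hup)) hq)
  intro θ hθ
  simp only [mem_ofPred_eq] at hθ ⊢
  rw [inner_smul_left]
  simp only [conj_trivial]
  rw [abs_mul, abs_of_pos (inv_pos.2 hup), inv_mul_lt_iff₀ hup]
  nlinarith

def DD {d : ℕ} (i j : Fin d) (θ θ' : Euc d) : ℝ := θ i * θ' j - θ j * θ' i

lemma DD_small (d : ℕ) {i j : Fin d} (hij : i ≠ j) {q : ℝ} (hq : 0 < q) (hq1 : q ≤ 1) :
    ((sph d).prod (sph d)).real {p | |DD i j p.1 p.2| < q ^ 2} ≤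
      2 * 2 ^ d * (sph d).real univ * q := by
  classical
  have hd : 0 < d := i.pos
  have hms : MeasurableSet {p : Euc d × Euc d | |DD i j p.1 p.2| < q ^ 2} := by
    refine (isOpen_lt ?_ continuous_const).measurableSet
    unfold DD; fun_prop
  have hbad : MeasurableSet {θ : Euc d | |θ i| < q} :=
    (isOpen_lt (by fun_prop) continuous_const).measurableSet
  have h1 : ((sph d).prod (sph d)) {p | |DD i j p.1 p.2| < q ^ 2} ≤
      ENNReal.ofReal (2 * 2 ^ d * (sph d).real univ * q) := by
    rw [Measure.prod_apply hms]
    have hpt : ∀ θ, sph d (Prod.mk θ ⁻¹' {p : Euc d × Euc d | |DD i j p.1 p.2| < q ^ 2}) ≤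
        {θ : Euc d | |θ i| < q}.indicator (fun _ => sph d univ) θ + ENNReal.ofReal (2 ^ d * q) := by
      intro θ
      by_cases hθ : |θ i| < q
      · rw [indicator_of_mem (by exact hθ)]
        exact (measure_mono (subset_univ _)).trans le_self_add
      · rw [indicator_of_notMem (by exact hθ), zero_add]
        let u : Euc d := EuclideanSpace.single j (θ i) - EuclideanSpace.single i (θ j)
        have hu : q ≤ ‖u‖ := by
          have h1 : ‖u j‖ ≤ ‖u‖ := PiLp.norm_apply_le _ j
          have h2 : u j = θ i := by simp [u, hij, hij.symm]
          rw [h2, Real.norm_eq_abs] at h1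
          push Not at hθ
          linarith
        have := slab_vec d hd u hq hu
        refine le_trans (measure_mono ?_) this
        intro θ' hθ'
        simp only [mem_preimage, mem_ofPred_eq, DD] at hθ' ⊢
        convert hθ' using 2
        simp [u, inner_sub_left, EuclideanSpace.inner_single_left]
    refine (lintegral_mono hpt).trans ?_
    rw [lintegral_add_right _ measurable_const, lintegral_indicator hbad, lintegral_const,
      lintegral_const, Measure.restrict_apply_univ]
    have h2 : sph d {θ : Euc d | |θ i| < q} ≤ ENNReal.ofReal (2 ^ d * q) := by
      have := slab_unit d hd (EuclideanSpace.single i (1:ℝ)) (by simp) hq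
      simpa [EuclideanSpace.inner_single_left] using this
    calc sph d univ * sph d {θ : Euc d | |θ i| < q} + ENNReal.ofReal (2 ^ d * q) * sph d univ
        ≤ sph d univ * ENNReal.ofReal (2 ^ d * q) + ENNReal.ofReal (2 ^ d * q) * sph d univ := by
          gcongr
      _ = ENNReal.ofReal ((sph d).real univ) * ENNReal.ofReal (2 ^ d * q)
          + ENNReal.ofReal (2 ^ d * q) * ENNReal.ofReal ((sph d).real univ) := by
          rw [ofReal_measureReal]
      _ = ENNReal.ofReal (2 * 2 ^ d * (sph d).real univ * q) := by
          rw [← ENNReal.ofReal_mul (by positivity), ← ENNReal.ofReal_mul (by positivity),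
            ← ENNReal.ofReal_add (by positivity) (by positivity)]
          congr 1; ring
  exact ENNReal.toReal_le_of_le_ofReal (by positivity) h1

lemma DD_int (d : ℕ) {i j : Fin d} (hij : i ≠ j) {q : ℝ} (hq : 0 < q) (hq1 : q ≤ 1) :
    ∫ p, (q ^ 4) ^ 2 / ((DD i j p.1 p.2) ^ 2 + (q ^ 4) ^ 2) ∂((sph d).prod (sph d)) ≤
      (2 * 2 ^ d * (sph d).real univ + ((sph d).prod (sph d)).real univ) * q := by
  have hms : MeasurableSet {p : Euc d × Euc d | |DD i j p.1 p.2| < q ^ 2} := by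
    refine (isOpen_lt ?_ continuous_const).measurableSet
    unfold DD; fun_prop
  have hpt : ∀ p : Euc d × Euc d, (q ^ 4) ^ 2 / ((DD i j p.1 p.2) ^ 2 + (q ^ 4) ^ 2) ≤
      {p : Euc d × Euc d | |DD i j p.1 p.2| < q ^ 2}.indicator (fun _ => (1:ℝ)) p + q := by
    intro p
    by_cases hp : |DD i j p.1 p.2| < q ^ 2
    · rw [indicator_of_mem (by exact hp)]
      have : (q ^ 4) ^ 2 / ((DD i j p.1 p.2) ^ 2 + (q ^ 4) ^ 2) ≤ 1 := by
        rw [div_le_one (by positivity)]; nlinarith [sq_nonneg (DD i j p.1 p.2)]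
      linarith
    · rw [indicator_of_notMem (by exact hp), zero_add]
      push Not at hp
      have h2 : (q^2)^2 ≤ (DD i j p.1 p.2)^2 := by
        rw [← sq_abs (DD i j p.1 p.2)]; gcongr
      rw [div_le_iff₀ (by positivity)]
      have h3 : q ^ 3 ≤ 1 := pow_le_one₀ hq.le hq1
      have h4 : (q^4)^2 ≤ q * (q^2)^2 := by
        have : (q^4)^2 = q^3 * (q * (q^2)^2) := by ring
        rw [this]
        exact mul_le_of_le_one_left (by positivity) h3
      have h5 : q * (q^2)^2 ≤ q * (DD i j p.1 p.2)^2 := by gcongr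
      have : 0 ≤ q * (q^4)^2 := by positivity
      linarith
  have hint2 : Integrable (fun p => {p : Euc d × Euc d | |DD i j p.1 p.2| < q ^ 2}.indicator
      (fun _ => (1:ℝ)) p + q) ((sph d).prod (sph d)) :=
    ((integrable_const 1).indicator hms).add (integrable_const q)
  refine (integral_mono_of_nonneg (Eventually.of_forall fun p => by positivity) hint2
    (Eventually.of_forall hpt)).trans ?_
  rw [integral_add ((integrable_const 1).indicator hms) (integrable_const q),
    integral_indicator hms, integral_const, integral_const]
  simp only [measureReal_restrict_apply_univ, smul_eq_mul, mul_one]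
  have := DD_small d hij hq hq1
  linarith

/-- rotation in the coordinate plane `(i,j)` -/
def rotFun {d : ℕ} (i j : Fin d) (α : ℝ) (θ : Euc d) : Euc d :=
  θ + (((Real.cos α - 1) * θ i - Real.sin α * θ j) • EuclideanSpace.single i (1:ℝ)
    + (Real.sin α * θ i + (Real.cos α - 1) * θ j) • EuclideanSpace.single j (1:ℝ))

def rot {d : ℕ} (i j : Fin d) (hij : i ≠ j) (α : ℝ) : Euc d ≃ₗᵢ[ℝ] Euc d :=
  LinearIsometry.toLinearIsometryEquiv
    { toFun := rotFun i j α
      map_add' := by intro x y; simp only [rotFun, PiLp.add_apply]; module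
      map_smul' := by
        intro c x; simp only [rotFun, PiLp.smul_apply, smul_eq_mul, RingHom.id_apply]; module
      norm_map' := by
        intro x
        have h : ‖rotFun i j α x‖ ^ 2 = ‖x‖ ^ 2 := by
          simp only [rotFun]
          rw [norm_add_sq_real, norm_add_sq_real]
          simp only [inner_add_right, inner_smul_right, inner_smul_left,
            EuclideanSpace.inner_single_right, EuclideanSpace.inner_single_left, norm_smul]
          simp [hij, hij.symm]
          have := Real.sin_sq_add_cos_sq α
          have hs : Real.sin α ^ 2 = 1 - Real.cos α ^ 2 := by linarith
          ring_nf
          rw [hs]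
          ring
        exact (sq_eq_sq₀ (norm_nonneg _) (norm_nonneg _)).1 h } rfl

lemma rot_apply {d : ℕ} (i j : Fin d) (hij : i ≠ j) (α : ℝ) (θ : Euc d) :
    rot i j hij α θ = rotFun i j α θ := rfl

lemma rotFun_i {d : ℕ} {i j : Fin d} (hij : i ≠ j) (α : ℝ) (θ : Euc d) :
    (rotFun i j α θ) i = Real.cos α * θ i - Real.sin α * θ j := by
  simp [rotFun, hij, hij.symm]; ring

lemma rotFun_j {d : ℕ} {i j : Fin d} (hij : i ≠ j) (α : ℝ) (θ : Euc d) :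
    (rotFun i j α θ) j = Real.sin α * θ i + Real.cos α * θ j := by
  simp [rotFun, hij, hij.symm]; ring

def gen {d : ℕ} (i j : Fin d) (θ : Euc d) : Euc d :=
  (- θ j) • EuclideanSpace.single i (1:ℝ) + (θ i) • EuclideanSpace.single j (1:ℝ)

lemma rotFun_deriv {d : ℕ} {i j : Fin d} (hij : i ≠ j) (α : ℝ) (θ : Euc d) :
    HasDerivAt (fun a => rotFun i j a θ) (gen i j (rotFun i j α θ)) α := by
  have hc := Real.hasDerivAt_cos α
  have hs := Real.hasDerivAt_sin α
  have h1 := ((((hc.sub_const 1).mul_const (θ i)).sub (hs.mul_const (θ j))).smul_const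
    (EuclideanSpace.single i (1:ℝ))).add
    (((hs.mul_const (θ i)).add ((hc.sub_const 1).mul_const (θ j))).smul_const
    (EuclideanSpace.single j (1:ℝ)))
  have h2 := h1.const_add θ
  refine HasDerivAt.congr_deriv h2 ?_
  unfold gen
  rw [rotFun_i hij, rotFun_j hij]
  module

end DistPf

namespace DistPf

lemma sph_bdd {d : ℕ} (hd : 0 < d) {q : Euc d → ℝ} (hq : Continuous q) :
    ∃ B, ∀ θ : Euc d, ‖θ‖ = 1 → ‖q θ‖ ≤ B := by
  obtain ⟨B, hB⟩ := (isCompact_sphere (0 : Euc d) 1).exists_bound_of_continuousOn hq.continuousOn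
  exact ⟨B, fun θ h => hB θ (by simpa using h)⟩

lemma sph_integrable {d : ℕ} (hd : 0 < d) {q : Euc d → ℝ} (hq : Continuous q) :
    Integrable q (sph d) := by
  obtain ⟨B, hB⟩ := sph_bdd hd hq
  refine Integrable.of_bound hq.aestronglyMeasurable B ?_
  filter_upwards [sph_norm d hd] with θ h using hB θ h

lemma sph2_norm (d : ℕ) (hd : 0 < d) :
    ∀ᵐ p ∂((sph d).prod (sph d)), ‖p.1‖ = 1 ∧ ‖p.2‖ = 1 := by
  have h := sph_norm d hd
  have h1 : ∀ᵐ p ∂((sph d).prod (sph d)), ‖p.1‖ = 1 :=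
    Measure.quasiMeasurePreserving_fst.ae h
  have h2 : ∀ᵐ p ∂((sph d).prod (sph d)), ‖p.2‖ = 1 :=
    Measure.quasiMeasurePreserving_snd.ae h
  filter_upwards [h1, h2] with p a b using ⟨a, b⟩

lemma sph2_integrable {d : ℕ} (hd : 0 < d) {q : Euc d × Euc d → ℝ} (hq : Continuous q) :
    Integrable q ((sph d).prod (sph d)) := by
  obtain ⟨B, hB⟩ := ((isCompact_sphere (0 : Euc d) 1).prod
    (isCompact_sphere (0 : Euc d) 1)).exists_bound_of_continuousOn hq.continuousOn
  refine Integrable.of_bound hq.aestronglyMeasurable B ?_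
  filter_upwards [sph2_norm d hd] with p h using hB p (by simpa using h)

lemma inv_deriv {d : ℕ} {i j : Fin d} (hij : i ≠ j) {q L : Euc d → ℝ} (hq : Continuous q)
    (hL : Continuous L)
    (h : ∀ θ α, HasDerivAt (fun a => q (rotFun i j a θ)) (L (rotFun i j α θ)) α) :
    ∫ θ, L θ ∂(sph d) = 0 := by
  have hd : 0 < d := i.pos
  obtain ⟨B, hB⟩ := sph_bdd hd hL
  have hrc : ∀ a, Continuous (fun θ : Euc d => rotFun i j a θ) := fun a =>
    (rot i j hij a).continuous
  have key := hasDerivAt_integral_of_dominated_loc_of_deriv_le (μ := sph d)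
    (F := fun a θ => q (rotFun i j a θ)) (F' := fun a θ => L (rotFun i j a θ)) (x₀ := (0:ℝ))
    (s := univ) (bound := fun _ => B) univ_mem
    (Eventually.of_forall fun a => (hq.comp (hrc a)).aestronglyMeasurable)
    (sph_integrable hd (hq.comp (hrc 0)))
    (hL.comp (hrc 0)).aestronglyMeasurable
    (by
      filter_upwards [sph_norm d hd] with θ hθ a _
      refine hB _ ?_
      rw [← rot_apply i j hij, LinearIsometryEquiv.norm_map, hθ])
    (integrable_const B)
    (Eventually.of_forall fun θ a _ => h θ a)
  have hconst : ∀ a, ∫ θ, q (rotFun i j a θ) ∂(sph d) = ∫ θ, q θ ∂(sph d) := by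
    intro a
    conv_rhs => rw [← sph_map d (rot i j hij a)]
    rw [integral_map (rot i j hij a).continuous.measurable.aemeasurable
      hq.aestronglyMeasurable]
    rfl
  simp only [hconst] at key
  have h0 := key.2.unique (hasDerivAt_const (0:ℝ) _)
  have hz : ∀ θ : Euc d, rotFun i j 0 θ = θ := by intro θ; simp [rotFun]
  simpa [hz] using h0

lemma absW (D δ : ℝ) (hδ : 0 < δ) : |(δ^2 - D^2)/(D^2+δ^2)^2| ≤ 1/δ^2 := by
  rw [abs_div, abs_of_pos (by positivity : 0 < (D^2+δ^2)^2), div_le_div_iff₀ (by positivity) (by positivity)]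
  have h1 : |δ^2 - D^2| ≤ D^2 + δ^2 := by
    rw [abs_le]; constructor <;> nlinarith [sq_nonneg D, sq_nonneg δ]
  nlinarith [sq_nonneg D, sq_nonneg δ, mul_le_mul h1 (by nlinarith [sq_nonneg D] : δ^2 ≤ D^2+δ^2) (by positivity) (by positivity)]

lemma derivW {f : ℝ → ℝ} {f' δ α : ℝ} (hδ : 0 < δ) (h : HasDerivAt f f' α) :
    HasDerivAt (fun a => f a / ((f a)^2 + δ^2)) ((δ^2 - (f α)^2)/((f α)^2+δ^2)^2 * f') α := by
  have hp : (f α)^2 + δ^2 ≠ 0 := by positivity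
  have := h.div ((h.pow 2).add_const (δ^2)) hp
  refine this.congr_deriv ?_
  simp
  field_simp
  ring

def pd {d : ℕ} (H : Euc d → ℝ) (i : Fin d) (x : Euc d) : ℝ :=
  fderiv ℝ H x (EuclideanSpace.single i (1:ℝ))

lemma pd_cont {d : ℕ} {H : Euc d → ℝ} (hH : ContDiff ℝ 1 H) (i : Fin d) : Continuous (pd H i) :=
  (hH.continuous_fderiv (by simp)).clm_apply continuous_const

lemma fderiv_gen {d : ℕ} {H : Euc d → ℝ} (i j : Fin d) (x θ : Euc d) :
    fderiv ℝ H x (gen i j θ) = - θ j * pd H i x + θ i * pd H j x := by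
  simp [gen, pd]

lemma lemK {d : ℕ} {i j : Fin d} (hij : i ≠ j) {H : Euc d → ℝ} (hH : ContDiff ℝ 1 H) {A A' : ℝ}
    (hA : ∀ x, |H x| ≤ A) (hA' : ∀ x, |pd H i x| ≤ A') {t : ℝ} (ht : t ≠ 0)
    {q : ℝ} (hq : 0 < q) (hq1 : q ≤ 1) (x : Euc d) :
    |∫ p, pd H i (x + t • (p.1 - p.2)) ∂((sph d).prod (sph d))| ≤
      4 * A / ((q^4)^2 * |t|) * ((sph d).prod (sph d)).real univ +
      A' * ((2 * 2 ^ d * (sph d).real univ + ((sph d).prod (sph d)).real univ) * q) := by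
  have hd : 0 < d := i.pos
  set δ := q^4 with hδdef
  have hδ : 0 < δ := by positivity
  have hA0 : 0 ≤ A := (abs_nonneg _).trans (hA 0)
  have hA0' : 0 ≤ A' := (abs_nonneg _).trans (hA' 0)
  set σ2 := (sph d).prod (sph d) with hσ2
  have hpi := pd_cont hH i
  have hpj := pd_cont hH j
  have hHc := hH.continuous
  have hne : ∀ p : Euc d × Euc d, (DD i j p.1 p.2)^2 + δ^2 ≠ 0 := fun p => by positivity
  have hDc : Continuous (fun p : Euc d × Euc d => DD i j p.1 p.2) := by unfold DD; fun_prop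
  let X : Euc d × Euc d → Euc d := fun p => x + t • (p.1 - p.2)
  have hXc : Continuous X := by fun_prop
  let W : Euc d × Euc d → ℝ := fun p => DD i j p.1 p.2 / ((DD i j p.1 p.2)^2 + δ^2)
  have hWc : Continuous W := hDc.div (by fun_prop) hne
  let W' : Euc d × Euc d → ℝ := fun p =>
    (δ^2 - (DD i j p.1 p.2)^2) / ((DD i j p.1 p.2)^2 + δ^2)^2
  have hWc' : Continuous W' := (by fun_prop : Continuous fun p : Euc d × Euc d =>
    (δ^2 - (DD i j p.1 p.2)^2)).div (by fun_prop) (fun p => by positivity)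
  let P : Euc d × Euc d → ℝ := fun p => p.1 i * p.2 i + p.1 j * p.2 j
  have hPc : Continuous P := by fun_prop
  let L1 : Euc d × Euc d → ℝ := fun p => (W' p * (- P p)) * (p.2 i * H (X p)) +
    W p * (p.2 i * (t * (- p.1 j * pd H i (X p) + p.1 i * pd H j (X p))))
  let L2 : Euc d × Euc d → ℝ := fun p => (W' p * P p) * (p.1 i * H (X p)) +
    W p * (p.1 i * (- t * (- p.2 j * pd H i (X p) + p.2 i * pd H j (X p))))
  have hL1c : Continuous L1 := by fun_prop
  have hL2c : Continuous L2 := by fun_prop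
  have e1 : ∫ p, L1 p ∂σ2 = 0 := by
    rw [hσ2, integral_prod_symm _ (sph2_integrable hd hL1c)]
    have : ∀ θ', ∫ θ, L1 (θ, θ') ∂(sph d) = 0 := by
      intro θ'
      refine inv_deriv hij (q := fun θ => W (θ, θ') * (θ' i * H (X (θ, θ')))) (by fun_prop)
        (by fun_prop) ?_
      intro θ α
      have hr := rotFun_deriv hij α θ
      have hDd : HasDerivAt (fun a => DD i j (rotFun i j a θ) θ')
          (- P (rotFun i j α θ, θ')) α := by
        simp only [DD, P, rotFun_i hij, rotFun_j hij]
        have hc := Real.hasDerivAt_cos α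
        have hs := Real.hasDerivAt_sin α
        refine (((((hc.mul_const (θ i)).sub (hs.mul_const (θ j))).mul_const (θ' j))).sub
          (((hs.mul_const (θ i)).add (hc.mul_const (θ j))).mul_const (θ' i))).congr_deriv ?_
        ring
      have hWd := derivW hδ hDd
      have hXd : HasDerivAt (fun a => X (rotFun i j a θ, θ'))
          (t • gen i j (rotFun i j α θ)) α := ((hr.sub_const θ').const_smul t).const_add x
      have hHd := ((hH.differentiable (by simp)) (X (rotFun i j α θ, θ'))).hasFDerivAt.comp_hasDerivAt α hXd
      have := hWd.mul (hHd.const_mul (θ' i))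
      refine this.congr_deriv ?_
      simp only [map_smul, fderiv_gen, smul_eq_mul]
      rfl
    simp [this]
  have e2 : ∫ p, L2 p ∂σ2 = 0 := by
    rw [hσ2, integral_prod _ (sph2_integrable hd hL2c)]
    have : ∀ θ, ∫ θ', L2 (θ, θ') ∂(sph d) = 0 := by
      intro θ
      refine inv_deriv hij (q := fun θ' => W (θ, θ') * (θ i * H (X (θ, θ')))) (by fun_prop)
        (by fun_prop) ?_
      intro θ' α
      have hr := rotFun_deriv hij α θ'
      have hDd : HasDerivAt (fun a => DD i j θ (rotFun i j a θ'))
          (P (θ, rotFun i j α θ')) α := by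
        simp only [DD, P, rotFun_i hij, rotFun_j hij]
        have hc := Real.hasDerivAt_cos α
        have hs := Real.hasDerivAt_sin α
        refine ((((hs.mul_const (θ' i)).add (hc.mul_const (θ' j))).const_mul (θ i)).sub
          ((((hc.mul_const (θ' i)).sub (hs.mul_const (θ' j))).const_mul (θ j)))).congr_deriv ?_
        ring
      have hWd := derivW hδ hDd
      have hXd : HasDerivAt (fun a => X (θ, rotFun i j a θ'))
          (t • (- gen i j (rotFun i j α θ'))) α := ((hr.const_sub θ).const_smul t).const_add x
      have hHd := ((hH.differentiable (by simp)) (X (θ, rotFun i j α θ'))).hasFDerivAt.comp_hasDerivAt α hXd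
      have := hWd.mul (hHd.const_mul (θ i))
      refine this.congr_deriv ?_
      simp only [map_smul, map_neg, fderiv_gen, smul_eq_mul]
      simp only [L2, W', W]
      simp only [Function.comp_apply]
      ring
    simp [this]
  let U : Euc d × Euc d → ℝ := fun p => W' p * P p * (p.1 i - p.2 i) * H (X p)
  have hUc : Continuous U := by fun_prop
  let V : Euc d × Euc d → ℝ := fun p => W p * DD i j p.1 p.2 * pd H i (X p)
  have hVc : Continuous V := by fun_prop
  have e3 : t * ∫ p, V p ∂σ2 = - ∫ p, U p ∂σ2 := by
    have h1 : ∫ p, (L1 p + L2 p) ∂σ2 = 0 := by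
      rw [integral_add (sph2_integrable hd hL1c) (sph2_integrable hd hL2c), e1, e2, add_zero]
    have h2 : ∀ p, L1 p + L2 p = U p + t * V p := by
      intro p; simp only [L1, L2, U, V, DD]; ring
    simp only [h2] at h1
    rw [integral_add (sph2_integrable hd hUc) ((sph2_integrable hd hVc).const_mul t),
      integral_const_mul] at h1
    linarith
  have e4 : |∫ p, U p ∂σ2| ≤ 4 * A / δ^2 * σ2.real univ := by
    rw [← Real.norm_eq_abs]
    refine norm_integral_le_of_norm_le_const ?_
    filter_upwards [sph2_norm d hd] with p hp
    have hc1 : ∀ k, |p.1 k| ≤ 1 := fun k => by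
      have := PiLp.norm_apply_le p.1 k; rwa [hp.1] at this
    have hc2 : ∀ k, |p.2 k| ≤ 1 := fun k => by
      have := PiLp.norm_apply_le p.2 k; rwa [hp.2] at this
    have hP : |P p| ≤ 2 := by
      refine (abs_add_le _ _).trans ?_
      rw [abs_mul, abs_mul]
      have := mul_le_one₀ (hc1 i) (abs_nonneg _) (hc2 i)
      have := mul_le_one₀ (hc1 j) (abs_nonneg _) (hc2 j)
      linarith
    have hdf : |p.1 i - p.2 i| ≤ 2 := (abs_sub _ _).trans (by linarith [hc1 i, hc2 i])
    simp only [U, Real.norm_eq_abs, abs_mul]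
    calc |W' p| * |P p| * |p.1 i - p.2 i| * |H (X p)| ≤ (1/δ^2) * 2 * 2 * A := by
          gcongr
          · exact absW _ _ hδ
          · exact hA _
      _ = 4 * A / δ^2 := by ring
  have e5 : |∫ p, V p ∂σ2| ≤ 4 * A / (δ^2 * |t|) * σ2.real univ := by
    have h1 : |t| * |∫ p, V p ∂σ2| ≤ 4 * A / δ^2 * σ2.real univ := by
      rw [← abs_mul, e3, abs_neg]; exact e4
    have ht' : 0 < |t| := abs_pos.2 ht
    calc |∫ p, V p ∂σ2| = |t| * |∫ p, V p ∂σ2| / |t| := by field_simp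
      _ ≤ 4 * A / δ^2 * σ2.real univ / |t| := by gcongr
      _ = _ := by field_simp
  let Z : Euc d × Euc d → ℝ := fun p => δ^2 / ((DD i j p.1 p.2)^2 + δ^2)
  have hZc : Continuous Z := continuous_const.div (by fun_prop) hne
  have e6 : |∫ p, Z p * pd H i (X p) ∂σ2| ≤
      A' * ((2 * 2 ^ d * (sph d).real univ + σ2.real univ) * q) := by
    rw [← Real.norm_eq_abs]
    refine (norm_integral_le_of_norm_le ((sph2_integrable hd hZc).const_mul A')
      (Eventually.of_forall fun p => ?_)).trans ?_
    · rw [norm_mul, mul_comm, Real.norm_eq_abs, Real.norm_of_nonneg (by positivity : 0 ≤ Z p)]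
      have : 0 ≤ Z p := by positivity
      gcongr
      exact hA' _
    · rw [integral_const_mul]
      gcongr
      exact DD_int d hij hq hq1
  have e7 : ∫ p, pd H i (X p) ∂σ2 = ∫ p, V p ∂σ2 + ∫ p, Z p * pd H i (X p) ∂σ2 := by
    rw [← integral_add (sph2_integrable hd hVc) (sph2_integrable hd (by fun_prop))]
    congr 1; ext p
    simp only [V, W, Z]
    have := hne p
    field_simp
  change |∫ p, pd H i (X p) ∂σ2| ≤ _
  rw [e7]
  exact (abs_add_le _ _).trans (add_le_add e5 e6)

end DistPf

namespace DistPf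

lemma shift_int {d : ℕ} {h K : Euc d → ℝ} {R : ℝ} (hsupp : ∀ x, R < ‖x‖ → h x = 0) (v : Euc d)
    (hv : ‖v‖ ≤ 1) :
    ∫ x, h x * K (x + v) = ∫ y in closedBall (0:Euc d) (R+1), h (y - v) * K y := by
  rw [setIntegral_eq_integral_of_forall_compl_eq_zero]
  · have := integral_add_right_eq_self (μ := (volume : Measure (Euc d)))
      (fun y => h (y - v) * K y) v
    rw [← this]
    simp
  · intro y hy
    have : R < ‖y - v‖ := by
      have h1 : R + 1 < ‖y‖ := by simpa using hy
      have := norm_sub_norm_le y v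
      linarith
    rw [hsupp _ this, zero_mul]

lemma lemD {d : ℕ} (hd : 0 < d) {h G : Euc d → ℝ} (hh : Continuous h) (hG : Continuous G)
    {A' M R κ lam t : ℝ} (hA' : ∀ x, |h x| ≤ A') (hM : ∀ x, |G x| ≤ M)
    (hsupp : ∀ x, R < ‖x‖ → h x = 0) (ht : |t| ≤ 1)
    (hκ : ∀ x, |∫ p, h (x + t • (p.1 - p.2)) ∂((sph d).prod (sph d))| ≤ κ) (hlam : 0 < lam) :
    |∫ θ, (∫ x, h x * G (x + t • θ)) ∂(sph d)| ≤
      M * (volume.real (closedBall (0:Euc d) (R+1))) * (lam + A' * κ / lam) := by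
  set B := closedBall (0:Euc d) (R+1) with hB
  set μ := (volume : Measure (Euc d)).restrict B with hμ
  have hfin : IsFiniteMeasure μ := ⟨by
    rw [hμ, Measure.restrict_apply_univ]; exact (isCompact_closedBall _ _).measure_lt_top⟩
  have hV : μ.real univ = volume.real B := by rw [hμ]; simp
  have hA0 : 0 ≤ A' := (abs_nonneg _).trans (hA' 0)
  have hM0 : 0 ≤ M := (abs_nonneg _).trans (hM 0)
  have hnorm : ∀ θ : Euc d, ‖θ‖ = 1 → ‖t • θ‖ ≤ 1 := by
    intro θ hθ; rw [norm_smul, hθ]; simpa using ht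
  let u : Euc d → ℝ := fun y => ∫ θ, h (y - t • θ) ∂(sph d)
  -- step 1
  have s1 : ∫ θ, (∫ x, h x * G (x + t • θ)) ∂(sph d) =
      ∫ θ, ∫ y, h (y - t • θ) * G y ∂μ ∂(sph d) := by
    refine integral_congr_ae ?_
    filter_upwards [sph_norm d hd] with θ hθ
    exact shift_int hsupp _ (hnorm θ hθ)
  have s2 : ∫ θ, ∫ y, h (y - t • θ) * G y ∂μ ∂(sph d) = ∫ y, u y * G y ∂μ := by
    rw [integral_integral_swap]
    · simp only [integral_mul_const, u]
    · refine Integrable.of_bound (by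
        refine Continuous.aestronglyMeasurable ?_
        unfold Function.uncurry; fun_prop) (A' * M) (Eventually.of_forall fun p => ?_)
      simp only [Function.uncurry, norm_mul, Real.norm_eq_abs]
      gcongr
      · exact hA' _
      · exact hM _
  have hum : AEStronglyMeasurable u μ := by
    refine StronglyMeasurable.aestronglyMeasurable ?_
    refine StronglyMeasurable.integral_prod_right
      (f := fun y θ => h (y - t • θ)) ?_
    refine Continuous.stronglyMeasurable ?_
    unfold Function.uncurry; fun_prop
  have hub : ∀ y, |u y| ≤ A' * (sph d).real univ := by
    intro y
    rw [← Real.norm_eq_abs]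
    exact norm_integral_le_of_norm_le_const (Eventually.of_forall fun θ => hA' _)
  have hu2i : Integrable (fun y => u y ^ 2) μ := by
    refine Integrable.of_bound (hum.pow 2) ((A' * (sph d).real univ)^2)
      (Eventually.of_forall fun y => ?_)
    rw [norm_pow, Real.norm_eq_abs]
    gcongr
    exact hub y
  have s3 : ∫ y, u y ^ 2 ∂μ ≤ A' * κ * volume.real B := by
    have r1 : ∀ y, u y ^ 2 = ∫ p, h (y - t • p.1) * h (y - t • p.2) ∂((sph d).prod (sph d)) := by
      intro y
      rw [integral_prod_mul (fun θ => h (y - t • θ)) (fun θ => h (y - t • θ)), sq]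
    simp only [r1]
    have hbd : ∀ a b : Euc d, ‖h a * h b‖ ≤ A' * A' := by
      intro a b
      rw [norm_mul]
      exact mul_le_mul (hA' _) (hA' _) (norm_nonneg _) hA0
    rw [integral_integral_swap]
    rotate_left
    · refine Integrable.of_bound (by
        refine Continuous.aestronglyMeasurable ?_
        unfold Function.uncurry; fun_prop) (A' * A') (Eventually.of_forall fun p => hbd _ _)
    have r2 : ∫ p, ∫ y, h (y - t • p.1) * h (y - t • p.2) ∂μ ∂((sph d).prod (sph d)) =
        ∫ p, ∫ x, h x * h (x + t • (p.1 - p.2)) ∂μ ∂((sph d).prod (sph d)) := by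
      refine integral_congr_ae ?_
      filter_upwards [sph2_norm d hd] with p hp
      have := shift_int (K := fun y => h (y - t • p.2)) hsupp _ (hnorm p.1 hp.1)
      rw [← this, hμ, setIntegral_eq_integral_of_forall_compl_eq_zero]
      · congr 1; ext x; congr 2; module
      · intro x hx
        have : R < ‖x‖ := by
          have h1 : R + 1 < ‖x‖ := by simpa [B] using hx
          linarith
        rw [hsupp _ this, zero_mul]
    rw [r2, integral_integral_swap]
    rotate_left
    · refine Integrable.of_bound (by
        refine Continuous.aestronglyMeasurable ?_
        unfold Function.uncurry; fun_prop) (A' * A') (Eventually.of_forall fun p => hbd _ _)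
    simp only [integral_const_mul]
    refine (le_abs_self _).trans ?_
    rw [← hV, ← Real.norm_eq_abs]
    refine norm_integral_le_of_norm_le_const (Eventually.of_forall fun x => ?_)
    rw [norm_mul]
    exact mul_le_mul (hA' x) (hκ x) (norm_nonneg _) hA0
  rw [s1, s2, ← Real.norm_eq_abs]
  have hint : Integrable (fun y => M * lam + M / lam * u y ^ 2) μ :=
    (integrable_const _).add (hu2i.const_mul _)
  refine (norm_integral_le_of_norm_le hint (Eventually.of_forall fun y => ?_)).trans ?_
  · rw [norm_mul, Real.norm_eq_abs, Real.norm_eq_abs]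
    have h1 : |u y| ≤ lam + u y ^ 2 / lam := by
      rw [← sq_abs (u y)]
      have : lam + |u y|^2 / lam = (lam^2 + |u y|^2)/lam := by field_simp
      rw [this, le_div_iff₀ hlam]
      nlinarith [sq_nonneg (lam - |u y|), abs_nonneg (u y)]
    calc |u y| * |G y| ≤ (lam + u y ^ 2 / lam) * M := by
          gcongr
          exact hM y
      _ = _ := by ring
  · rw [integral_add (integrable_const _) (hu2i.const_mul _), integral_const, integral_const_mul,
      hV, smul_eq_mul]
    have : M / lam * ∫ y, u y ^ 2 ∂μ ≤ M / lam * (A' * κ * volume.real B) := by gcongr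
    refine (add_le_add_right this _).trans (le_of_eq ?_)
    field_simp

end DistPf

namespace DistPf

def bmp (d : ℕ) : ContDiffBump (0 : Euc d) := ⟨1/2, 3/4, by norm_num, by norm_num⟩

def phi (d : ℕ) : Euc d → ℝ := bmp d

lemma phi_smooth (d : ℕ) : ContDiff ℝ 2 (phi d) := (bmp d).contDiff (n := 2)

lemma phi_nn (d : ℕ) (x : Euc d) : 0 ≤ phi d x := (bmp d).nonneg
lemma phi_le (d : ℕ) (x : Euc d) : phi d x ≤ 1 := (bmp d).le_one
lemma phi_one (d : ℕ) (x : Euc d) (h : ‖x‖ ≤ 1/2) : phi d x = 1 :=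
  (bmp d).one_of_mem_closedBall (by simpa [bmp] using h)
lemma phi_zero (d : ℕ) (x : Euc d) (h : 3/4 ≤ ‖x‖) : phi d x = 0 :=
  (bmp d).zero_of_le_dist (by simpa [bmp] using h)

def kk {d : ℕ} (i : Fin d) (y : Euc d) : ℝ := y i * phi d y

lemma coord_cd {d : ℕ} (i : Fin d) {n : WithTop ℕ∞} : ContDiff ℝ n (fun y : Euc d => y i) := by
  fun_prop

lemma kk_smooth {d : ℕ} (i : Fin d) : ContDiff ℝ 2 (kk i : Euc d → ℝ) :=
  (coord_cd i).mul (phi_smooth d)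

lemma kk_zero {d : ℕ} (i : Fin d) (x : Euc d) (h : 3/4 ≤ ‖x‖) : kk i x = 0 := by
  rw [kk, phi_zero d x h, mul_zero]

lemma kk_le {d : ℕ} (i : Fin d) (x : Euc d) : |kk i x| ≤ 1 := by
  by_cases h : 3/4 ≤ ‖x‖
  · rw [kk_zero i x h]; simp
  · push Not at h
    rw [kk, abs_mul, abs_of_nonneg (phi_nn d x)]
    have h1 : |x i| ≤ ‖x‖ := PiLp.norm_apply_le x i
    exact mul_le_one₀ (by linarith) (phi_nn d x) (phi_le d x)

lemma pd_zero {d : ℕ} {k : Euc d → ℝ} (hk : ∀ x : Euc d, 3/4 ≤ ‖x‖ → k x = 0) (i : Fin d)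
    (x : Euc d) (h : 1 ≤ ‖x‖) : pd k i x = 0 := by
  have : k =ᶠ[𝓝 x] fun _ => 0 := by
    have ho : IsOpen {y : Euc d | 3/4 < ‖y‖} := isOpen_lt continuous_const continuous_norm
    filter_upwards [ho.mem_nhds (show 3/4 < ‖x‖ by linarith)] with y hy
    exact hk y (le_of_lt hy)
  rw [pd, this.fderiv_eq]
  simp

lemma pd_bdd {d : ℕ} {k : Euc d → ℝ} (hs : ContDiff ℝ 2 k)
    (hk : ∀ x : Euc d, 3/4 ≤ ‖x‖ → k x = 0) (i : Fin d) : ∃ B, ∀ x, |pd k i x| ≤ B := by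
  obtain ⟨B, hB⟩ := (isCompact_closedBall (0 : Euc d) 1).exists_bound_of_continuousOn
    (pd_cont (hs.of_le (by norm_num)) i).continuousOn
  refine ⟨max B 0, fun x => ?_⟩
  by_cases h : ‖x‖ ≤ 1
  · exact (hB x (by simpa using h)).trans (le_max_left _ _)
  · rw [pd_zero hk i x (by linarith)]; simp

def Sm {d : ℕ} (S : Finset (Euc d)) (w : Euc d → ℝ) (τ : ℝ) (k : Euc d → ℝ) (x : Euc d) : ℝ :=
  ∑ p ∈ S, w p * ((τ⁻¹)^d * k (τ⁻¹ • (x - p)))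

lemma Sm_bound {d N : ℕ} {s : ℝ} {S : Finset (Euc d)} {w : Euc d → ℝ} (h : Sys d N s S w)
    (hs0 : 0 ≤ s) (hsd : s ≤ d) {τ : ℝ} (hτN : (1/2)^N ≤ τ) (hτ1 : τ ≤ 1)
    {k : Euc d → ℝ} {B : ℝ} (hB : ∀ x, |k x| ≤ B) (hk : ∀ x, 1 ≤ ‖x‖ → k x = 0) (x : Euc d) :
    |Sm S w τ k x| ≤ B * 6^d * τ ^ (s - d) := by
  classical
  have hτ0 : 0 < τ := lt_of_lt_of_le (by positivity) hτN
  have hB0 : 0 ≤ B := (abs_nonneg _).trans (hB 0)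
  have h1 := h.ball hs0 hsd hτN hτ1 x (S.filter fun p => ‖x - p‖ < τ) (Finset.filter_subset _ _)
    (fun p hp => (Finset.mem_filter.1 hp).2)
  have h2 : |Sm S w τ k x| ≤ ∑ p ∈ S with ‖x - p‖ < τ, w p * ((τ⁻¹)^d * B) := by
    rw [Sm]
    refine (Finset.abs_sum_le_sum_abs _ _).trans ?_
    rw [Finset.sum_filter]
    refine Finset.sum_le_sum fun p _ => ?_
    split_ifs with hp
    · rw [abs_mul, abs_mul, abs_of_nonneg (h.nn p), abs_of_nonneg (by positivity : 0 ≤ (τ⁻¹)^d)]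
      have := h.nn p
      gcongr
      exact hB _
    · rw [hk]
      · simp
      · rw [norm_smul, Real.norm_of_nonneg (by positivity), inv_mul_eq_div, one_le_div hτ0]
        linarith
  refine h2.trans ?_
  rw [← Finset.sum_mul]
  calc (∑ p ∈ S with ‖x - p‖ < τ, w p) * ((τ⁻¹)^d * B) ≤ (6^d * τ^s) * ((τ⁻¹)^d * B) := by gcongr
    _ = _ := by
      rw [Real.rpow_sub hτ0, Real.rpow_natCast, inv_pow]; field_simp

lemma Sm_crude {d : ℕ} {S : Finset (Euc d)} {w : Euc d → ℝ} (hw : ∀ x, 0 ≤ w x) {τ c : ℝ}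
    (hc : 0 < c) (hτ : c ≤ τ)
    {k : Euc d → ℝ} {B : ℝ} (hB : ∀ x, |k x| ≤ B) (x : Euc d) :
    |Sm S w τ k x| ≤ (∑ p ∈ S, w p) * ((c⁻¹)^d * B) := by
  have hτ0 : 0 < τ := hc.trans_le hτ
  rw [Sm, Finset.sum_mul]
  refine (Finset.abs_sum_le_sum_abs _ _).trans (Finset.sum_le_sum fun p _ => ?_)
  rw [abs_mul, abs_mul, abs_of_nonneg (hw p), abs_of_nonneg (by positivity : 0 ≤ (τ⁻¹)^d)]
  have := hw p
  gcongr
  exact hB _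

lemma Sm_zero {d : ℕ} {S : Finset (Euc d)} {w : Euc d → ℝ} (hS : ∀ p ∈ S, p ∈ unitCube d)
    {τ : ℝ} (hτ : 0 < τ) (hτ1 : τ ≤ 1)
    {k : Euc d → ℝ} (hk : ∀ x, 1 ≤ ‖x‖ → k x = 0) (x : Euc d) (hx : (d:ℝ) + 1 < ‖x‖) :
    Sm S w τ k x = 0 := by
  refine Finset.sum_eq_zero fun p hp => ?_
  rw [hk]
  · simp
  · have hpn : ‖p‖ ≤ d := by
      have h1 : ‖p‖ ≤ ∑ i, |p i| := by
        have : p = ∑ i, (p i) • EuclideanSpace.single i (1:ℝ) := by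
          ext j; simp [Finset.sum_apply, Pi.single_apply]
        conv_lhs => rw [this]
        refine (norm_sum_le _ _).trans (Finset.sum_le_sum fun i _ => ?_)
        rw [norm_smul]; simp
      refine h1.trans ?_
      calc ∑ i, |p i| ≤ ∑ i : Fin d, (1:ℝ) := Finset.sum_le_sum fun i _ => by
            have := hS p hp i
            rw [abs_of_nonneg this.1]; exact this.2
        _ = d := by simp
    have h2 := norm_sub_norm_le x p
    rw [norm_smul, Real.norm_of_nonneg (by positivity), inv_mul_eq_div, one_le_div hτ]
    linarith

lemma Sm_cd {d : ℕ} {S : Finset (Euc d)} {w : Euc d → ℝ} {τ : ℝ} {k : Euc d → ℝ}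
    {n : WithTop ℕ∞} (hk : ContDiff ℝ n k) : ContDiff ℝ n (Sm S w τ k) := by
  unfold Sm
  refine ContDiff.sum fun p _ => ?_
  refine contDiff_const.mul (contDiff_const.mul (hk.comp ?_))
  fun_prop

lemma Sm_cont {d : ℕ} {S : Finset (Euc d)} {w : Euc d → ℝ} {τ : ℝ} {k : Euc d → ℝ}
    (hk : Continuous k) : Continuous (Sm S w τ k) := by
  unfold Sm
  fun_prop

lemma Sm_pd {d : ℕ} {S : Finset (Euc d)} {w : Euc d → ℝ} {τ : ℝ} {k : Euc d → ℝ}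
    (hk : Differentiable ℝ k) (i : Fin d) (x : Euc d) :
    pd (Sm S w τ k) i x = τ⁻¹ * Sm S w τ (pd k i) x := by
  have hd : ∀ p ∈ S, HasFDerivAt (fun x => w p * ((τ⁻¹)^d * k (τ⁻¹ • (x - p))))
      (w p • ((τ⁻¹)^d • ((fderiv ℝ k (τ⁻¹ • (x - p))).comp
        (τ⁻¹ • (ContinuousLinearMap.id ℝ (Euc d)))))) x := by
    intro p _
    refine HasFDerivAt.const_mul (HasFDerivAt.const_mul ?_ _) _
    refine (hk _).hasFDerivAt.comp x ?_
    exact ((hasFDerivAt_id x).sub_const p).const_smul τ⁻¹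
  have := HasFDerivAt.fun_sum hd
  rw [pd]
  have h2 : fderiv ℝ (Sm S w τ k) x = _ := this.fderiv
  rw [h2, ContinuousLinearMap.sum_apply, Sm, Finset.mul_sum]
  refine Finset.sum_congr rfl fun p _ => ?_
  simp [pd]
  ring

lemma pd_kk {d : ℕ} (i : Fin d) (y : Euc d) :
    pd (kk i) i y = phi d y + y i * pd (phi d) i y := by
  have h1 : HasFDerivAt (fun y : Euc d => y i) (EuclideanSpace.proj i : Euc d →L[ℝ] ℝ) y :=
    (EuclideanSpace.proj i : Euc d →L[ℝ] ℝ).hasFDerivAt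
  have h2 := ((phi_smooth d).differentiable (by norm_num) y).hasFDerivAt
  have h3 := (h1.mul h2).fderiv
  have h4 : fderiv ℝ (kk i) y = _ := h3
  rw [pd, h4]
  simp [pd]
  ring

lemma sum_pd {d : ℕ} (k : Euc d → ℝ) (y : Euc d) :
    fderiv ℝ k y y = ∑ i, y i * pd k i y := by
  have : y = ∑ i, (y i) • EuclideanSpace.single i (1:ℝ) := by
    ext j; simp [Finset.sum_apply, Pi.single_apply]
  have h2 : fderiv ℝ k y (∑ i, (y i) • EuclideanSpace.single i (1:ℝ)) = ∑ i, y i * pd k i y := by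
    rw [map_sum]; simp [pd]
  rwa [← this] at h2

lemma Sm_dtau {d : ℕ} (hd : 0 < d) {S : Finset (Euc d)} {w : Euc d → ℝ} {τ : ℝ} (hτ : 0 < τ)
    (x : Euc d) :
    HasDerivAt (fun τ => Sm S w τ (phi d) x) (- ∑ i, pd (Sm S w τ (kk i)) i x) τ := by
  have hterm : ∀ p ∈ S, HasDerivAt (fun τ : ℝ => w p * ((τ⁻¹)^d * phi d (τ⁻¹ • (x - p))))
      (w p * (- τ⁻¹ * ((τ⁻¹)^d * ∑ i, pd (kk i) i (τ⁻¹ • (x - p))))) τ := by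
    intro p _
    refine HasDerivAt.const_mul _ ?_
    have hi := hasDerivAt_inv hτ.ne'
    have h1 := hi.pow d
    have h2 := ((phi_smooth d).differentiable (by norm_num) (τ⁻¹ • (x - p))).hasFDerivAt.comp_hasDerivAt
      τ (hi.smul_const (x - p))
    refine (h1.mul h2).congr_deriv ?_
    have h3 : (-(τ^2)⁻¹) • (x - p) = (- τ⁻¹) • (τ⁻¹ • (x - p)) := by
      rw [smul_smul]; congr 1; field_simp
    rw [h3, map_smul, sum_pd]
    simp only [pd_kk, Finset.sum_add_distrib, Finset.sum_const, Finset.card_univ, Fintype.card_fin]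
    obtain ⟨n, rfl⟩ : ∃ n, d = n + 1 := ⟨d - 1, by omega⟩
    simp only [smul_eq_mul, nsmul_eq_mul, Nat.add_sub_cancel, Function.comp_apply]
    simp only [Pi.pow_apply, ← inv_pow]
    ring
  have h := HasDerivAt.fun_sum hterm
  refine HasDerivAt.congr_deriv (f := fun τ => Sm S w τ (phi d) x) h ?_
  have hpd : ∀ i : Fin d, pd (Sm S w τ (kk i)) i x = τ⁻¹ * Sm S w τ (pd (kk i) i) x := fun i =>
    Sm_pd ((kk_smooth i).differentiable (by norm_num)) i x
  simp only [hpd, Sm]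
  rw [← Finset.mul_sum, Finset.sum_comm, ← neg_mul, Finset.mul_sum]
  refine Finset.sum_congr rfl fun p _ => ?_
  rw [← Finset.mul_sum, ← Finset.mul_sum]
  ring

end DistPf

namespace DistPf

def Rd (d : ℕ) : ℝ := d + 1

def cst (d : ℕ) : ℝ := 32 * ((sph d).prod (sph d)).real univ +
  (2 * 2 ^ d * (sph d).real univ + ((sph d).prod (sph d)).real univ)

lemma main_bound {d : ℕ} (hd : 2 ≤ d) {C0 : ℝ} (hC0 : 0 ≤ C0) {P t : ℝ} (hP : 1 ≤ P)
    (ht : 1/8 ≤ |t|) (ht1 : |t| ≤ 1) (i : Fin d) {H G : Euc d → ℝ} (hH : ContDiff ℝ 1 H)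
    (hG : Continuous G) (hHb : ∀ x, |H x| ≤ C0 * P) (hHb' : ∀ x, |pd H i x| ≤ C0 * P^129)
    (hGb : ∀ x, |G x| ≤ C0 * P) (hsupp : ∀ x, Rd d < ‖x‖ → pd H i x = 0) :
    |∫ θ, (∫ x, pd H i x * G (x + t • θ)) ∂(sph d)| ≤
      (C0 * volume.real (closedBall (0:Euc d) (Rd d+1)) * (1 + C0^2 * cst d)) * P^126 := by
  have hP0 : 0 < P := by linarith
  have : Nontrivial (Fin d) := Fin.nontrivial_iff_two_le.2 hd
  obtain ⟨j, hj⟩ := exists_ne i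
  have ht0 : t ≠ 0 := by
    intro h; rw [h] at ht; norm_num at ht
  have htp : 0 < |t| := abs_pos.2 ht0
  have hq : 0 < (P⁻¹)^8 := by positivity
  have hq1 : (P⁻¹)^8 ≤ 1 := pow_le_one₀ (by positivity) (inv_le_one_of_one_le₀ hP)
  have hκ : ∀ x, |∫ p, pd H i (x + t • (p.1 - p.2)) ∂((sph d).prod (sph d))| ≤
      C0 * cst d * P^121 := by
    intro x
    refine (lemK hj.symm hH hHb hHb' ht0 hq hq1 x).trans ?_
    have h1 : 4 * (C0 * P) / ((((P⁻¹)^8)^4)^2 * |t|) ≤ C0 * 32 * P^121 := by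
      rw [div_le_iff₀ (by positivity)]
      have e : C0 * 32 * P^121 * ((((P⁻¹)^8)^4)^2 * |t|) = 32 * |t| * (C0 * P^57) := by
        have e0 : ((((P⁻¹)^8)^4)^2) = (P^64)⁻¹ := by rw [inv_pow, inv_pow, inv_pow]; congr 1; ring
        rw [e0]; field_simp
      rw [e]
      have h2 : P ≤ P^57 := le_self_pow₀ hP (by norm_num)
      have h3 : C0 * P ≤ C0 * P^57 := by gcongr
      have h4 : 0 ≤ C0 * P^57 := by positivity
      nlinarith
    have h5 : C0 * P^129 * ((2 * 2 ^ d * (sph d).real univ + ((sph d).prod (sph d)).real univ) *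
        (P⁻¹)^8) = C0 * (2 * 2 ^ d * (sph d).real univ + ((sph d).prod (sph d)).real univ) * P^121 := by
      rw [inv_pow]; field_simp
    rw [h5]
    have h6 : 4 * (C0 * P) / ((((P⁻¹)^8)^4)^2 * |t|) * ((sph d).prod (sph d)).real univ ≤
      C0 * 32 * P^121 * ((sph d).prod (sph d)).real univ := by gcongr
    refine (add_le_add_left h6 _).trans (le_of_eq ?_)
    rw [cst]; ring
  have := lemD (by omega) (pd_cont hH i) hG hHb' hGb hsupp ht1 hκ (lam := P^125) (by positivity)
  refine this.trans (le_of_eq ?_)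
  field_simp

def muB (d : ℕ) : Measure (Euc d) := volume.restrict (closedBall (0:Euc d) (Rd d + 1))

instance (d : ℕ) : IsFiniteMeasure (muB d) := ⟨by
    rw [muB, Measure.restrict_apply_univ]; exact (isCompact_closedBall _ _).measure_lt_top⟩

def Bil {d : ℕ} (t : ℝ) (f g : Euc d → ℝ) : ℝ :=
  ∫ p, f p.2 * g (p.2 + t • p.1) ∂((sph d).prod (muB d))

lemma Bil_int {d : ℕ} (t : ℝ) {f g : Euc d → ℝ} (hf : Continuous f) (hg : Continuous g)
    {A B : ℝ} (hA : ∀ x, |f x| ≤ A) (hB : ∀ x, |g x| ≤ B) :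
    Integrable (fun p : Euc d × Euc d => f p.2 * g (p.2 + t • p.1)) ((sph d).prod (muB d)) := by
  refine Integrable.of_bound (by
    refine Continuous.aestronglyMeasurable ?_
    fun_prop) (A * B) (Eventually.of_forall fun p => ?_)
  rw [norm_mul]
  exact mul_le_mul (hA _) (hB _) (norm_nonneg _) ((abs_nonneg _).trans (hA 0))

lemma restr {d : ℕ} {f K : Euc d → ℝ} (hs : ∀ x, Rd d < ‖x‖ → f x = 0) :
    ∫ x, f x * K x ∂(muB d) = ∫ x, f x * K x := by
  rw [muB, setIntegral_eq_integral_of_forall_compl_eq_zero]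
  intro x hx
  have : Rd d < ‖x‖ := by
    have h1 : Rd d + 1 < ‖x‖ := by simpa using hx
    linarith
  rw [hs _ this, zero_mul]

lemma Bil1 {d : ℕ} (t : ℝ) {f g : Euc d → ℝ} (hf : Continuous f) (hg : Continuous g)
    {A B : ℝ} (hA : ∀ x, |f x| ≤ A) (hB : ∀ x, |g x| ≤ B)
    (hs : ∀ x, Rd d < ‖x‖ → f x = 0) :
    Bil t f g = ∫ θ, (∫ x, f x * g (x + t • θ)) ∂(sph d) := by
  rw [Bil, integral_prod _ (Bil_int t hf hg hA hB)]
  congr 1; ext θ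
  exact restr hs

lemma Bil2 {d : ℕ} (hd : 0 < d) {t : ℝ} (ht : |t| ≤ 1) {f g : Euc d → ℝ} (hf : Continuous f)
    (hg : Continuous g) {A B : ℝ} (hA : ∀ x, |f x| ≤ A) (hB : ∀ x, |g x| ≤ B)
    (hs : ∀ x, Rd d < ‖x‖ → f x = 0) (hs' : ∀ x, Rd d < ‖x‖ → g x = 0) :
    Bil t f g = ∫ θ, (∫ x, g x * f (x + (-t) • θ)) ∂(sph d) := by
  rw [Bil1 t hf hg hA hB hs]
  refine integral_congr_ae ?_
  filter_upwards [sph_norm d hd] with θ hθ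
  rw [shift_int hs (t • θ) (by rw [norm_smul, hθ]; simpa using ht)]
  have := restr (K := fun x => f (x + (-t) • θ)) hs'
  rw [← this, muB]
  congr 1; ext y
  rw [mul_comm, neg_smul, sub_eq_add_neg]

end DistPf

namespace DistPf

lemma exists_Bk (d : ℕ) : ∃ B : ℝ, 1 ≤ B ∧ ∀ (i : Fin d) (x : Euc d), |pd (kk i) i x| ≤ B := by
  choose b hb using fun i : Fin d => pd_bdd (kk_smooth i) (kk_zero i) i
  refine ⟨1 + ∑ i, |b i|, by have := Finset.sum_nonneg (s := Finset.univ) fun i _ => abs_nonneg (b i); linarith, fun i x => ?_⟩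
  have h1 := Finset.single_le_sum (s := Finset.univ) (f := fun i => |b i|) (fun i _ => abs_nonneg (b i))
    (Finset.mem_univ i)
  have h2 := le_abs_self (b i)
  have := hb i x
  linarith

def Bk (d : ℕ) : ℝ := (exists_Bk d).choose
lemma Bk_one (d : ℕ) : 1 ≤ Bk d := (exists_Bk d).choose_spec.1
lemma Bk_spec {d : ℕ} (i : Fin d) (x : Euc d) : |pd (kk i) i x| ≤ Bk d :=
  (exists_Bk d).choose_spec.2 i x

def df {d : ℕ} (S : Finset (Euc d)) (w : Euc d → ℝ) (τ : ℝ) (x : Euc d) : ℝ :=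
  - ∑ i, pd (Sm S w τ (kk i)) i x

lemma kk_one {d : ℕ} (i : Fin d) : ContDiff ℝ 1 (kk i : Euc d → ℝ) :=
  (kk_smooth i).of_le (by norm_num)

lemma phi_cont (d : ℕ) : Continuous (phi d) := (phi_smooth d).continuous

lemma df_cont {d : ℕ} (S : Finset (Euc d)) (w : Euc d → ℝ) (τ : ℝ) : Continuous (df S w τ) := by
  unfold df
  refine (continuous_finsetSum _ fun i _ => ?_).neg
  exact pd_cont (Sm_cd (kk_one i)) i

lemma phi_abs (d : ℕ) (x : Euc d) : |phi d x| ≤ 1 := by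
  rw [abs_of_nonneg (phi_nn d x)]; exact phi_le d x

lemma df_crude {d : ℕ} {S : Finset (Euc d)} {w : Euc d → ℝ} (hw : ∀ x, 0 ≤ w x) {c : ℝ}
    (hc : 0 < c) : ∃ A, ∀ τ, c ≤ τ → ∀ x, |df S w τ x| ≤ A := by
  refine ⟨∑ _i : Fin d, c⁻¹ * ((∑ p ∈ S, w p) * ((c⁻¹)^d * Bk d)), fun τ hτ x => ?_⟩
  have hτ0 : 0 < τ := hc.trans_le hτ
  rw [df, abs_neg]
  refine (Finset.abs_sum_le_sum_abs _ _).trans (Finset.sum_le_sum fun i _ => ?_)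
  rw [Sm_pd ((kk_smooth i).differentiable (by norm_num)), abs_mul,
    abs_of_nonneg (by positivity : 0 ≤ τ⁻¹)]
  exact mul_le_mul (inv_anti₀ hc hτ) (Sm_crude hw hc hτ (Bk_spec i) x) (abs_nonneg _) (by positivity)

lemma I_deriv {d : ℕ} (hd : 0 < d) {S S' : Finset (Euc d)} {w w' : Euc d → ℝ}
    (hw : ∀ x, 0 ≤ w x) (hw' : ∀ x, 0 ≤ w' x) (t : ℝ) {τ : ℝ} (hτ : 0 < τ) :
    HasDerivAt (fun τ => Bil t (Sm S w τ (phi d)) (Sm S' w' τ (phi d)))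
      (Bil t (df S w τ) (Sm S' w' τ (phi d)) + Bil t (Sm S w τ (phi d)) (df S' w' τ)) τ := by
  have hc : 0 < τ/2 := by linarith
  obtain ⟨A1, hA1⟩ := df_crude (S := S) hw hc
  obtain ⟨A2, hA2⟩ := df_crude (S := S') hw' hc
  set D1 := (∑ p ∈ S, w p) * (((τ/2)⁻¹)^d * 1)
  set D2 := (∑ p ∈ S', w' p) * (((τ/2)⁻¹)^d * 1)
  have hD1 : ∀ τ', τ/2 ≤ τ' → ∀ x, |Sm S w τ' (phi d) x| ≤ D1 := fun τ' h x =>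
    Sm_crude hw hc h (phi_abs d) x
  have hD2 : ∀ τ', τ/2 ≤ τ' → ∀ x, |Sm S' w' τ' (phi d) x| ≤ D2 := fun τ' h x =>
    Sm_crude hw' hc h (phi_abs d) x
  have hτ2 : τ/2 ≤ τ := by linarith
  have hcS : ∀ τ', Continuous (Sm S w τ' (phi d)) := fun _ => Sm_cont (phi_cont d)
  have hcS' : ∀ τ', Continuous (Sm S' w' τ' (phi d)) := fun _ => Sm_cont (phi_cont d)
  have hdS := df_cont S w
  have hdS' := df_cont S' w'
  have key := hasDerivAt_integral_of_dominated_loc_of_deriv_le (μ := (sph d).prod (muB d))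
    (F := fun τ p => Sm S w τ (phi d) p.2 * Sm S' w' τ (phi d) (p.2 + t • p.1))
    (F' := fun τ p => df S w τ p.2 * Sm S' w' τ (phi d) (p.2 + t • p.1) +
      Sm S w τ (phi d) p.2 * df S' w' τ (p.2 + t • p.1)) (x₀ := τ)
    (s := Ioi (τ/2)) (bound := fun _ => A1 * D2 + D1 * A2) (Ioi_mem_nhds (by linarith))
    (Eventually.of_forall fun a => by
      have h1 := hcS a
      have h2 := hcS' a
      refine Continuous.aestronglyMeasurable ?_
      fun_prop)
    (Bil_int t (hcS τ) (hcS' τ) (hD1 τ hτ2) (hD2 τ hτ2))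
    (by
      have h1 := hcS τ
      have h2 := hcS' τ
      have h3 := hdS τ
      have h4 := hdS' τ
      refine Continuous.aestronglyMeasurable ?_
      fun_prop)
    (Eventually.of_forall fun p a ha => by
      have ha' : τ/2 ≤ a := le_of_lt ha
      refine (norm_add_le _ _).trans ?_
      rw [norm_mul, norm_mul]
      exact add_le_add
        (mul_le_mul (hA1 a ha' _) (hD2 a ha' _) (norm_nonneg _) ((abs_nonneg _).trans (hA1 a ha' 0)))
        (mul_le_mul (hD1 a ha' _) (hA2 a ha' _) (norm_nonneg _) ((abs_nonneg _).trans (hD1 a ha' 0))))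
    (integrable_const _)
    (Eventually.of_forall fun p a ha => by
      have ha' : 0 < a := hc.trans ha
      exact (Sm_dtau hd ha' p.2).mul (Sm_dtau hd ha' (p.2 + t • p.1)))
  refine key.2.congr_deriv ?_
  rw [integral_add (Bil_int t (hdS τ) (hcS' τ) (hA1 τ hτ2) (hD2 τ hτ2))
    (Bil_int t (hcS τ) (hdS' τ) (hD1 τ hτ2) (hA2 τ hτ2))]
  rfl

lemma Bil_sum_left {d : ℕ} (t : ℝ) {h : Fin d → Euc d → ℝ} {g : Euc d → ℝ}
    (hh : ∀ i, Continuous (h i)) (hg : Continuous g)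
    {A B : ℝ} (hA : ∀ i x, |h i x| ≤ A) (hB : ∀ x, |g x| ≤ B) :
    Bil t (fun x => - ∑ i, h i x) g = - ∑ i, Bil t (h i) g := by
  simp only [Bil]
  rw [← integral_finsetSum _ (fun i _ => Bil_int t (hh i) hg (hA i) hB), ← integral_neg]
  congr 1; ext p; rw [neg_mul, Finset.sum_mul]

lemma Bil_sum_right {d : ℕ} (t : ℝ) {h : Fin d → Euc d → ℝ} {g : Euc d → ℝ}
    (hh : ∀ i, Continuous (h i)) (hg : Continuous g)
    {A B : ℝ} (hA : ∀ i x, |h i x| ≤ A) (hB : ∀ x, |g x| ≤ B) :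
    Bil t g (fun x => - ∑ i, h i x) = - ∑ i, Bil t g (h i) := by
  simp only [Bil]
  rw [← integral_finsetSum _ (fun i _ => Bil_int t hg (hh i) hB (hA i)), ← integral_neg]
  congr 1; ext p; simp [Finset.mul_sum]

def C0 (d : ℕ) : ℝ := Bk d * 6^d
def C1 (d : ℕ) : ℝ := C0 d * volume.real (closedBall (0:Euc d) (Rd d+1)) * (1 + (C0 d)^2 * cst d)

lemma C0_nn (d : ℕ) : 0 ≤ C0 d := by have := Bk_one d; unfold C0; positivity
lemma cst_nn (d : ℕ) : 0 ≤ cst d := by unfold cst; positivity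
lemma C1_nn (d : ℕ) : 0 ≤ C1 d := by
  have := C0_nn d; have := cst_nn d; unfold C1; positivity

lemma I_bound {d N : ℕ} (hd : 2 ≤ d) {s : ℝ} (hs : (d:ℝ) - 1/128 ≤ s) (hsd : s ≤ d)
    {S S' : Finset (Euc d)} {w w' : Euc d → ℝ} (h : Sys d N s S w) (h' : Sys d N s S' w')
    {t : ℝ} (ht : 1/8 ≤ |t|) (ht1 : |t| ≤ 1) {τ : ℝ} (hτN : (1/2)^N ≤ τ) (hτ1 : τ ≤ 1) :
    |Bil t (df S w τ) (Sm S' w' τ (phi d)) + Bil t (Sm S w τ (phi d)) (df S' w' τ)| ≤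
      2 * d * C1 d * τ ^ ((1:ℝ)/64 - 1) := by
  have hτ0 : 0 < τ := lt_of_lt_of_le (by positivity) hτN
  have hd2 : (2:ℝ) ≤ d := by exact_mod_cast hd
  have hs0 : 0 ≤ s := by linarith
  set P : ℝ := τ ^ (-(1:ℝ)/128) with hPdef
  have hP : 1 ≤ P := Real.one_le_rpow_of_pos_of_le_one_of_nonpos hτ0 hτ1 (by norm_num)
  have hP128 : P^128 = τ⁻¹ := by
    rw [hPdef, ← Real.rpow_natCast, ← Real.rpow_mul hτ0.le, ← Real.rpow_neg_one]; norm_num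
  have hP126 : P^126 = τ ^ ((1:ℝ)/64 - 1) := by
    rw [hPdef, ← Real.rpow_natCast, ← Real.rpow_mul hτ0.le]; norm_num
  have hsP : τ ^ (s - d) ≤ P := by
    rw [hPdef]
    exact Real.rpow_le_rpow_of_exponent_ge hτ0 hτ1 (by linarith)
  have hB1 := Bk_one d
  have hC0 := C0_nn d
  -- generic bounds
  have gen : ∀ {S : Finset (Euc d)} {w : Euc d → ℝ}, Sys d N s S w → ∀ {k : Euc d → ℝ},
      (∀ x, |k x| ≤ Bk d) → (∀ x, 1 ≤ ‖x‖ → k x = 0) → ∀ x, |Sm S w τ k x| ≤ C0 d * P := by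
    intro S w h k hk hz x
    refine (Sm_bound h hs0 hsd hτN hτ1 hk hz x).trans ?_
    rw [C0]; gcongr
  have hphi1 : ∀ x : Euc d, |phi d x| ≤ Bk d := fun x => (phi_abs d x).trans hB1
  have hphi0 : ∀ x : Euc d, 1 ≤ ‖x‖ → phi d x = 0 := fun x hx => phi_zero d x (by linarith)
  have hkk1 : ∀ i (x : Euc d), |kk i x| ≤ Bk d := fun i x => (kk_le i x).trans hB1
  have hkk0 : ∀ i (x : Euc d), 1 ≤ ‖x‖ → kk i x = 0 := fun i x hx => kk_zero i x (by linarith)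
  have hpk0 : ∀ i (x : Euc d), 1 ≤ ‖x‖ → pd (kk i) i x = 0 := fun i x hx => pd_zero (kk_zero i) i x hx
  have pdb : ∀ {S : Finset (Euc d)} {w : Euc d → ℝ}, Sys d N s S w → ∀ i x,
      |pd (Sm S w τ (kk i)) i x| ≤ C0 d * P^129 := by
    intro S w h i x
    rw [Sm_pd ((kk_smooth i).differentiable (by norm_num)), abs_mul,
      abs_of_nonneg (by positivity : 0 ≤ τ⁻¹), ← hP128]
    have := gen h (Bk_spec i) (hpk0 i) x
    calc P^128 * |Sm S w τ (pd (kk i) i) x| ≤ P^128 * (C0 d * P) := by gcongr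
      _ = _ := by ring
  have pdz : ∀ {S : Finset (Euc d)} {w : Euc d → ℝ}, Sys d N s S w → ∀ i x, Rd d < ‖x‖ →
      pd (Sm S w τ (kk i)) i x = 0 := by
    intro S w h i x hx
    rw [Sm_pd ((kk_smooth i).differentiable (by norm_num)),
      Sm_zero h.mem hτ0 hτ1 (hpk0 i) x hx, mul_zero]
  have fz : ∀ {S : Finset (Euc d)} {w : Euc d → ℝ}, Sys d N s S w → ∀ x, Rd d < ‖x‖ →
      Sm S w τ (phi d) x = 0 := fun h x hx => Sm_zero h.mem hτ0 hτ1 hphi0 x hx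
  have hcS : ∀ {S : Finset (Euc d)} {w : Euc d → ℝ}, Continuous (Sm S w τ (phi d)) :=
    Sm_cont (phi_cont d)
  have hcp : ∀ {S : Finset (Euc d)} {w : Euc d → ℝ} i, Continuous (pd (Sm S w τ (kk i)) i) :=
    fun i => pd_cont (Sm_cd (kk_one i)) i
  have b1 : |Bil t (df S w τ) (Sm S' w' τ (phi d))| ≤ d * (C1 d * P^126) := by
    have e : Bil t (df S w τ) (Sm S' w' τ (phi d)) =
        - ∑ i, Bil t (pd (Sm S w τ (kk i)) i) (Sm S' w' τ (phi d)) :=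
      Bil_sum_left t hcp hcS (pdb h) (gen h' hphi1 hphi0)
    rw [e, abs_neg]
    refine (Finset.abs_sum_le_sum_abs _ _).trans ?_
    have : ∀ i ∈ (Finset.univ : Finset (Fin d)),
        |Bil t (pd (Sm S w τ (kk i)) i) (Sm S' w' τ (phi d))| ≤ C1 d * P^126 := by
      intro i _
      rw [Bil1 t (hcp i) hcS (pdb h i) (gen h' hphi1 hphi0) (pdz h i)]
      exact main_bound hd hC0 hP ht ht1 i (Sm_cd (kk_one i)) hcS (gen h (hkk1 i) (hkk0 i))
        (pdb h i) (gen h' hphi1 hphi0) (pdz h i)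
    refine (Finset.sum_le_sum this).trans ?_
    simp
  have b2 : |Bil t (Sm S w τ (phi d)) (df S' w' τ)| ≤ d * (C1 d * P^126) := by
    have e : Bil t (Sm S w τ (phi d)) (df S' w' τ) =
        - ∑ i, Bil t (Sm S w τ (phi d)) (pd (Sm S' w' τ (kk i)) i) :=
      Bil_sum_right t hcp hcS (pdb h') (gen h hphi1 hphi0)
    rw [e, abs_neg]
    refine (Finset.abs_sum_le_sum_abs _ _).trans ?_
    have : ∀ i ∈ (Finset.univ : Finset (Fin d)),
        |Bil t (Sm S w τ (phi d)) (pd (Sm S' w' τ (kk i)) i)| ≤ C1 d * P^126 := by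
      intro i _
      rw [Bil2 (by omega) ht1 hcS (hcp i) (gen h hphi1 hphi0) (pdb h' i) (fz h) (pdz h' i)]
      exact main_bound hd hC0 hP (by rwa [abs_neg]) (by rwa [abs_neg]) i (Sm_cd (kk_one i)) hcS
        (gen h' (hkk1 i) (hkk0 i)) (pdb h' i) (gen h hphi1 hphi0) (pdz h' i)
    refine (Finset.sum_le_sum this).trans ?_
    simp
  rw [← hP126]
  refine (abs_add_le _ _).trans ?_
  linarith

lemma I_mono {d N : ℕ} (hd : 2 ≤ d) {s : ℝ} (hs : (d:ℝ) - 1/128 ≤ s) (hsd : s ≤ d)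
    {S S' : Finset (Euc d)} {w w' : Euc d → ℝ} (h : Sys d N s S w) (h' : Sys d N s S' w')
    {t : ℝ} (ht : 1/8 ≤ |t|) (ht1 : |t| ≤ 1) {τ : ℝ} (hτN : (1/2)^N ≤ τ) (hτ1 : τ ≤ 1) :
    Bil t (Sm S w τ (phi d)) (Sm S' w' τ (phi d)) - 64 * (2 * d * C1 d) * τ ^ ((1:ℝ)/64) ≤
    Bil t (Sm S w ((1/2)^N) (phi d)) (Sm S' w' ((1/2)^N) (phi d)) := by
  have hN0 : (0:ℝ) < (1/2)^N := by positivity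
  set J : ℝ → ℝ := fun τ => Bil t (Sm S w τ (phi d)) (Sm S' w' τ (phi d)) -
    64 * (2 * d * C1 d) * τ ^ ((1:ℝ)/64) with hJ
  have hder : ∀ x, (1/2)^N ≤ x → HasDerivAt J
      ((Bil t (df S w x) (Sm S' w' x (phi d)) + Bil t (Sm S w x (phi d)) (df S' w' x)) -
        64 * (2 * d * C1 d) * (((1:ℝ)/64) * x ^ ((1:ℝ)/64 - 1))) x := by
    intro x hx
    have hx0 : 0 < x := hN0.trans_le hx
    refine (I_deriv (by omega) h.nn h'.nn t hx0).sub (HasDerivAt.const_mul _ ?_)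
    exact Real.hasDerivAt_rpow_const (Or.inl hx0.ne')
  have hanti : AntitoneOn J (Icc ((1/2)^N) τ) := by
    refine antitoneOn_of_deriv_nonpos (convex_Icc _ _)
      (fun x hx => (hder x hx.1).continuousAt.continuousWithinAt)
      (fun x hx => ?_) (fun x hx => ?_)
    · rw [interior_Icc] at hx
      exact (hder x hx.1.le).differentiableAt.differentiableWithinAt
    · rw [interior_Icc] at hx
      rw [(hder x hx.1.le).deriv]
      have := I_bound hd hs hsd h h' ht ht1 hx.1.le (hx.2.le.trans hτ1)
      have := (le_abs_self _).trans this
      linarith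
  have := hanti (left_mem_Icc.2 hτN) (right_mem_Icc.2 hτN) hτN
  refine this.trans ?_
  have h1 := C1_nn d
  have : 0 ≤ 64 * (2 * d * C1 d) * ((1/2:ℝ)^N) ^ ((1:ℝ)/64) := by positivity
  simp only [hJ]
  linarith

end DistPf

namespace DistPf

lemma cube_norm {d : ℕ} {p : Euc d} (hp : p ∈ unitCube d) : ‖p‖ ≤ d := by
  have h1 : ‖p‖ ≤ ∑ i, |p i| := by
    have : p = ∑ i, (p i) • EuclideanSpace.single i (1:ℝ) := by
      ext j; simp [Finset.sum_apply, Pi.single_apply]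
    conv_lhs => rw [this]
    refine (norm_sum_le _ _).trans (Finset.sum_le_sum fun i _ => ?_)
    rw [norm_smul]; simp
  refine h1.trans ?_
  calc ∑ i, |p i| ≤ ∑ i : Fin d, (1:ℝ) := Finset.sum_le_sum fun i _ => by
        have := hp i
        rw [abs_of_nonneg this.1]; exact this.2
    _ = d := by simp

lemma Sm_nn {d : ℕ} {S : Finset (Euc d)} {w : Euc d → ℝ} (hw : ∀ x, 0 ≤ w x) {τ : ℝ}
    (hτ : 0 < τ) (x : Euc d) : 0 ≤ Sm S w τ (phi d) x :=
  Finset.sum_nonneg fun p _ => mul_nonneg (hw p) (mul_nonneg (by positivity) (phi_nn d _))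

lemma Sm_lower {d N : ℕ} (hd : 0 < d) {s : ℝ} {S : Finset (Euc d)} {w : Euc d → ℝ}
    (h : Sys d N s S w)
    {k : ℕ} (hk : k ≤ N) {m : ℝ}
    (hm : m ≤ ∑ p ∈ S, w p - ((2:ℝ) ^ (k * d) - 1) * ((2:ℝ) ^ (-s)) ^ k)
    {x : Euc d} (hx : x ∈ unitCube d) :
    ((2 * (d:ℝ) * (1/2)^k)⁻¹)^d * m ≤ Sm S w (2 * d * (1/2)^k) (phi d) x := by
  have hd' : (0:ℝ) < d := by exact_mod_cast hd
  set τ : ℝ := 2 * d * (1/2)^k with hτ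
  have hτ0 : 0 < τ := by positivity
  have h1 := hm.trans (h.cell_mass hk (x := x))
  calc (τ⁻¹)^d * m ≤ (τ⁻¹)^d * ∑ p ∈ S with cell k p = cell k x, w p := by gcongr
    _ = ∑ p ∈ S with cell k p = cell k x, w p * ((τ⁻¹)^d * phi d (τ⁻¹ • (x - p))) := by
      rw [Finset.mul_sum]
      refine Finset.sum_congr rfl fun p hp => ?_
      rw [Finset.mem_filter] at hp
      have := cell_diam k hx (h.mem p hp.1) hp.2.symm
      rw [phi_one]
      · ring
      · rw [norm_smul, Real.norm_of_nonneg (by positivity), inv_mul_le_iff₀ hτ0, hτ]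
        linarith
    _ ≤ _ := by
      refine Finset.sum_le_sum_of_subset_of_nonneg (Finset.filter_subset _ _) fun p _ _ => ?_
      exact mul_nonneg (h.nn p) (mul_nonneg (by positivity) (phi_nn d _))

def ctr (d : ℕ) : Euc d := WithLp.toLp 2 (fun _ => 1/2)

lemma Q_coord {d : ℕ} {x : Euc d} (hx : x ∈ ball (ctr d) (1/4)) (i : Fin d) :
    1/4 ≤ x i ∧ x i ≤ 3/4 := by
  have h1 : ‖(x - ctr d) i‖ ≤ ‖x - ctr d‖ := PiLp.norm_apply_le _ i
  rw [mem_ball, dist_eq_norm] at hx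
  have h2 : |x i - 1/2| ≤ 1/4 := by
    have : (x - ctr d) i = x i - 1/2 := by simp [ctr]
    rw [this] at h1
    exact h1.trans hx.le
  rw [abs_le] at h2
  constructor <;> linarith [h2.1, h2.2]

def c2 (d : ℕ) : ℝ := (sph d).real univ * volume.real (ball (ctr d) (1/4))

lemma c2_pos (d : ℕ) : 0 < c2 d := by
  refine mul_pos (sph_univ_pos d) ?_
  exact ENNReal.toReal_pos (measure_ball_pos _ _ (by norm_num)).ne' measure_ball_lt_top.ne

lemma Bil_lower {d : ℕ} (hd : 0 < d) {t : ℝ} (ht : |t| ≤ 1/4) {f g : Euc d → ℝ}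
    (hf : Continuous f) (hg : Continuous g) {A B : ℝ} (hA : ∀ x, |f x| ≤ A) (hB : ∀ x, |g x| ≤ B)
    (hf0 : ∀ x, 0 ≤ f x) (hg0 : ∀ x, 0 ≤ g x) {c : ℝ} (hc : 0 ≤ c)
    (hfc : ∀ x ∈ unitCube d, c ≤ f x) (hgc : ∀ x ∈ unitCube d, c ≤ g x) :
    c^2 * c2 d ≤ Bil t f g := by
  set Q := ball (ctr d) (1/4) with hQ
  have hQm : MeasurableSet ((univ : Set (Euc d)) ×ˢ Q) := MeasurableSet.univ.prod measurableSet_ball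
  have hQs : Q ⊆ closedBall (0:Euc d) (Rd d + 1) := by
    intro x hx
    have hxc : x ∈ unitCube d := fun i => by
      have := Q_coord hx i; exact ⟨by linarith [this.1], by linarith [this.2]⟩
    have := cube_norm hxc
    rw [mem_closedBall_zero_iff, Rd]; linarith
  have h1 : c^2 * c2 d = ∫ p, (univ ×ˢ Q).indicator (fun _ : Euc d × Euc d => c^2) p
      ∂((sph d).prod (muB d)) := by
    rw [integral_indicator hQm, setIntegral_const, measureReal_prod_prod, smul_eq_mul, mul_comm, c2]
    congr 2
    rw [muB, measureReal_restrict_apply measurableSet_ball, inter_eq_left.2 hQs]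
  rw [h1, Bil]
  refine integral_mono_ae ((integrable_const _).indicator hQm) (Bil_int t hf hg hA hB) ?_
  have hn : ∀ᵐ p ∂((sph d).prod (muB d)), ‖p.1‖ = 1 :=
    Measure.quasiMeasurePreserving_fst.ae (sph_norm d hd)
  filter_upwards [hn] with p hp
  by_cases hpQ : p ∈ (univ : Set (Euc d)) ×ˢ Q
  · rw [indicator_of_mem hpQ]
    have hx := fun i => Q_coord hpQ.2 i
    have m1 : p.2 ∈ unitCube d := fun i => ⟨by linarith [(hx i).1], by linarith [(hx i).2]⟩
    have m2 : p.2 + t • p.1 ∈ unitCube d := fun i => by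
      have h3 : |t * p.1 i| ≤ 1/4 := by
        have h4 : |p.1 i| ≤ 1 := by
          have := PiLp.norm_apply_le p.1 i; rwa [hp] at this
        rw [abs_mul]
        calc |t| * |p.1 i| ≤ 1/4 * 1 := by gcongr
          _ = 1/4 := by norm_num
      rw [abs_le] at h3
      simp only [PiLp.add_apply, PiLp.smul_apply, smul_eq_mul, mem_Icc]
      constructor <;> linarith [(hx i).1, (hx i).2, h3.1, h3.2]
    rw [sq]
    exact mul_le_mul (hfc _ m1) (hgc _ m2) hc (hf0 _)
  · rw [indicator_of_notMem hpQ]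
    exact mul_nonneg (hf0 _) (hg0 _)

lemma Bil_ne {d : ℕ} (hd : 0 < d) {t : ℝ} {f g : Euc d → ℝ} (h : 0 < Bil t f g) :
    ∃ θ x : Euc d, ‖θ‖ = 1 ∧ f x ≠ 0 ∧ g (x + t • θ) ≠ 0 := by
  by_contra hcon
  push Not at hcon
  have hn : ∀ᵐ p ∂((sph d).prod (muB d)), ‖p.1‖ = 1 :=
    Measure.quasiMeasurePreserving_fst.ae (sph_norm d hd)
  have : Bil t f g = 0 := by
    rw [Bil]
    refine integral_eq_zero_of_ae ?_
    filter_upwards [hn] with p hp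
    by_cases hf : f p.2 = 0
    · simp [hf]
    · simp [hcon p.1 p.2 hp hf]
  linarith

lemma Sm_ne {d : ℕ} {S : Finset (Euc d)} {w : Euc d → ℝ} {τ : ℝ} (hτ : 0 < τ) {x : Euc d}
    (h : Sm S w τ (phi d) x ≠ 0) : ∃ p ∈ S, ‖x - p‖ ≤ τ := by
  obtain ⟨p, hp, hne⟩ := Finset.exists_ne_zero_of_sum_ne_zero h
  refine ⟨p, hp, ?_⟩
  by_contra hcon
  push Not at hcon
  apply hne
  rw [phi_zero]
  · simp
  · rw [norm_smul, Real.norm_of_nonneg (by positivity), inv_mul_eq_div, le_div_iff₀ hτ]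
    linarith

lemma exists_eps (d k : ℕ) : ∃ ε : ℝ, 0 < ε ∧ ε ≤ 1/128 ∧
    ((2:ℝ) ^ (k * d) - 1) * ((2:ℝ) ^ (-((d:ℝ) - ε))) ^ k ≤ 1 - 3/4 * (1/2)^(k*d) := by
  have hc : Continuous (fun ε : ℝ => ((2:ℝ) ^ (k * d) - 1) * ((2:ℝ) ^ (-((d:ℝ) - ε))) ^ k) := by
    have : Continuous (fun ε : ℝ => (2:ℝ) ^ (-((d:ℝ) - ε))) :=
      continuous_const.rpow (by fun_prop) (fun _ => Or.inl (by norm_num))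
    fun_prop
  have h0 : ((2:ℝ) ^ (k * d) - 1) * ((2:ℝ) ^ (-((d:ℝ) - 0))) ^ k < 1 - 3/4 * (1/2)^(k*d) := by
    have e : ((2:ℝ) ^ (-((d:ℝ) - 0))) ^ k = (1/2)^(k*d) := by
      rw [sub_zero, Real.rpow_neg (by norm_num), Real.rpow_natCast, ← inv_pow, ← pow_mul, mul_comm d k]
      norm_num
    rw [e]
    have e2 : (2:ℝ)^(k*d) * (1/2)^(k*d) = 1 := by rw [← mul_pow]; norm_num
    have : (0:ℝ) < (1/2)^(k*d) := by positivity
    rw [sub_mul, e2]; linarith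
  have hev := hc.continuousAt.eventually_lt (continuousAt_const (y := 1 - 3/4 * (1/2:ℝ)^(k*d))) h0
  obtain ⟨r, hr, hb⟩ := Metric.eventually_nhds_iff.1 hev
  refine ⟨min (r/2) (1/128), by positivity, min_le_right _ _, le_of_lt (hb ?_)⟩
  rw [dist_zero_right, Real.norm_of_nonneg (by positivity)]
  exact (min_le_left _ _).trans_lt (by linarith)

theorem core {d : ℕ} (hd : 2 ≤ d) : ∃ (k0 : ℕ) (ρ ε : ℝ), 0 < ρ ∧ ρ < 1/2 ∧ 0 < ε ∧ ε ≤ 1/128 ∧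
    ∀ (N : ℕ), k0 ≤ N → ∀ (S S' : Finset (Euc d)) (w w' : Euc d → ℝ),
      Sys d N (d - ε) S w → Sys d N (d - ε) S' w' → 1 - 2 * ρ ≤ ∑ p ∈ S, w p →
      1 - 2 * ρ ≤ ∑ p ∈ S', w' p → ∀ t : ℝ, 1/8 ≤ t → t ≤ 1/4 →
      ∃ p ∈ S, ∃ p' ∈ S', |dist p p' - t| ≤ 2 * (1/2)^N := by
  have hd0 : (0:ℝ) < d := by exact_mod_cast (by omega : 0 < d)
  set c1 : ℝ := ((2 * (d:ℝ))⁻¹)^d / 2 with hc1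
  have hc1p : 0 < c1 := by positivity
  have hc2 := c2_pos d
  -- choose k0
  have hlim : Tendsto (fun k : ℕ => (2 * d * (1/2:ℝ)^k)) atTop (𝓝 0) := by
    have := (tendsto_pow_atTop_nhds_zero_of_lt_one (r := (1/2:ℝ)) (by norm_num) (by norm_num)).const_mul (2 * (d:ℝ))
    simpa using this
  have hlim2 : Tendsto (fun k : ℕ => 64 * (2 * d * C1 d) * (2 * d * (1/2:ℝ)^k) ^ ((1:ℝ)/64))
      atTop (𝓝 0) := by
    have := (hlim.rpow_const (p := (1:ℝ)/64) (Or.inr (by norm_num))).const_mul (64 * (2 * d * C1 d))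
    rw [Real.zero_rpow (by norm_num), mul_zero] at this
    exact this
  obtain ⟨k0, hk1, hk2⟩ := ((hlim.eventually_lt_const (show (0:ℝ) < 1 by norm_num)).and
    (hlim2.eventually_lt_const (show 0 < c1^2 * c2 d by positivity))).exists
  obtain ⟨ε, hε, hε1, hε2⟩ := exists_eps d k0
  have hpw : (0:ℝ) < (1/2)^(k0*d) := by positivity
  have hpw1 : (1/2:ℝ)^(k0*d) ≤ 1 := pow_le_one₀ (by norm_num) (by norm_num)
  refine ⟨k0, (1/2)^(k0*d)/8, ε, by positivity, by linarith, hε, hε1, ?_⟩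
  intro N hN S S' w w' h h' hm hm' t ht ht'
  have htabs : |t| = t := abs_of_nonneg (by linarith)
  set τ : ℝ := 2 * d * (1/2)^k0 with hτ
  have hτ0 : 0 < τ := by positivity
  have hτN : (1/2)^N ≤ τ := by
    have h1 : (1/2:ℝ)^N ≤ (1/2)^k0 := pow_le_pow_of_le_one (by norm_num) (by norm_num) hN
    have h2 : (2:ℝ) ≤ d := by exact_mod_cast hd
    have h3 : (0:ℝ) < (1/2)^k0 := by positivity
    rw [hτ]; nlinarith
  have hmm : ∀ {S : Finset (Euc d)} {w : Euc d → ℝ}, Sys d N (d - ε) S w →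
      1 - 2 * ((1/2)^(k0*d)/8) ≤ ∑ p ∈ S, w p → ∀ x ∈ unitCube d,
      c1 ≤ Sm S w τ (phi d) x := by
    intro S w h hm x hx
    have := Sm_lower (by omega) h hN (m := (1/2)^(k0*d)/2) (by linarith) hx
    refine le_trans (le_of_eq ?_) this
    rw [hc1, pow_mul]
    have ha : (0:ℝ) < (1/2)^k0 := by positivity
    generalize (1/2:ℝ)^k0 = a at ha
    rw [mul_inv (2 * (d:ℝ)) a, mul_pow (2 * (d:ℝ))⁻¹ a⁻¹ d, inv_pow a]
    have : a^d ≠ 0 := by positivity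
    field_simp
  have hcr : ∀ {S : Finset (Euc d)} {w : Euc d → ℝ}, Sys d N (d - ε) S w → ∀ x,
      |Sm S w τ (phi d) x| ≤ _ := fun h x => Sm_crude h.nn hτ0 le_rfl (phi_abs d) x
  have hlow := Bil_lower (by omega) (by rw [htabs]; exact ht' : |t| ≤ 1/4)
    (Sm_cont (phi_cont d)) (Sm_cont (phi_cont d)) (hcr h) (hcr h') (Sm_nn h.nn hτ0)
    (Sm_nn h'.nn hτ0) hc1p.le (hmm h hm) (hmm h' hm')
  have hmono := I_mono hd (by linarith) (by linarith) h h' (by rw [htabs]; exact ht)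
    (by rw [htabs]; linarith) hτN hk1.le
  have hpos : 0 < Bil t (Sm S w ((1/2)^N) (phi d)) (Sm S' w' ((1/2)^N) (phi d)) := by linarith
  obtain ⟨θ, x, hθ, hf, hg⟩ := Bil_ne (by omega) hpos
  obtain ⟨p, hp, hpx⟩ := Sm_ne (by positivity) hf
  obtain ⟨p', hp', hpx'⟩ := Sm_ne (by positivity) hg
  refine ⟨p, hp, p', hp', ?_⟩
  have e1 : t = ‖t • θ‖ := by rw [norm_smul, hθ, Real.norm_eq_abs, htabs, mul_one]
  rw [dist_comm, dist_eq_norm]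
  have e3 : |‖p' - p‖ - t| = |‖p' - p‖ - ‖t • θ‖| := by rw [← e1]
  rw [e3]
  refine (abs_norm_sub_norm_le _ _).trans ?_
  have e2 : p' - p - t • θ = (x - p) - (x + t • θ - p') := by abel
  rw [e2]
  refine (norm_sub_le _ _).trans ?_
  linarith

end DistPf

namespace DistPf

lemma hc_empty {α β : Type*} (c : ℕ → α → β) (v : ℝ≥0∞) : hc c v ∅ = 0 := by
  refine le_antisymm ((hc_le (C := ∅) (by intro x hx; exact hx.elim)).trans ?_) zero_le
  simp [wt]

lemma shrink {α β : Type*} {c : ℕ → α → β} (hn : Nested c) (v : ℝ≥0∞) (f : (ℕ → ℕ) → α)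
    {L : ℝ≥0∞} (hL : L ≠ ⊤) (h : L < hc c v (range f)) :
    ∃ (n : ℕ → ℕ) (X : ℕ → Set (ℕ → ℕ)), (∀ N, L < hc c v (f '' X N)) ∧
      ∀ N, ∀ j < N, ∀ a ∈ X N, a j ≤ n j := by
  have step : ∀ (X : {X : Set (ℕ → ℕ) // L < hc c v (f '' X)}) (j : ℕ),
      ∃ m : ℕ, L < hc c v (f '' (X.1 ∩ {a | a j ≤ m})) := by
    intro X j
    by_contra hcon
    push Not at hcon
    have h1 := hc_iUnion_le hn v (A := fun m => f '' (X.1 ∩ {a | a j ≤ m}))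
      (by
        intro m m' hm
        refine image_mono (inter_subset_inter_right _ ?_)
        intro a ha
        exact le_trans (show a j ≤ m from ha) hm) hL hcon
    have h2 : (⋃ m, f '' (X.1 ∩ {a | a j ≤ m})) = f '' X.1 := by
      rw [← image_iUnion, ← inter_iUnion]
      congr 1
      refine inter_eq_left.2 fun a _ => mem_iUnion.2 ⟨a j, le_refl (a j)⟩
    rw [h2] at h1
    exact absurd X.2 (not_lt.2 h1)
  choose m hm using step
  let Y : ℕ → {X : Set (ℕ → ℕ) // L < hc c v (f '' X)} := fun N =>
    Nat.rec ⟨univ, by rwa [image_univ]⟩ (fun j X => ⟨X.1 ∩ {a | a j ≤ m X j}, hm X j⟩) N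
  have hY : ∀ j, (Y (j+1)).1 = (Y j).1 ∩ {a | a j ≤ m (Y j) j} := fun j => rfl
  have hanti : Antitone (fun j => (Y j).1) := antitone_nat_of_succ_le fun j => by
    rw [hY]; exact inter_subset_left
  refine ⟨fun j => m (Y j) j, fun N => (Y N).1, fun N => (Y N).2, fun N j hj a ha => ?_⟩
  have := hanti (show j + 1 ≤ N from hj) ha
  simp only [hY] at this
  exact this.2

lemma cell_fin {d : ℕ} (N : ℕ) (A : Set (Euc d)) : (cell N '' A).Finite := by
  refine Set.Finite.subset (Set.Finite.pi' (t := fun _ : Fin d => Set.Iio (2^N))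
    (fun _ => Set.finite_Iio _)) ?_
  rintro _ ⟨x, _, rfl⟩ i
  exact cell_lt N x i

lemma mkSys {d : ℕ} {s L : ℝ} (N : ℕ) {A : Set (Euc d)} (hA : A ⊆ unitCube d)
    (h : ENNReal.ofReal L < hc cell (ENNReal.ofReal ((2:ℝ) ^ (-s))) A) :
    ∃ (S : Finset (Euc d)) (w : Euc d → ℝ), (∀ x ∈ S, x ∈ A) ∧ Sys d N s S w ∧
      L ≤ ∑ p ∈ S, w p := by
  obtain ⟨S, w, h1, h2, h3, h4⟩ := frostman (cell_nested (d := d)) (r := (2:ℝ) ^ (-s))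
    (by positivity) N (cell_fin N A)
  refine ⟨S, w, h1, ⟨fun x hx => hA (h1 x hx), h2, fun k hk b => ?_⟩, ?_⟩
  · convert h3 k hk b
  · have := h.trans_le h4
    exact (ENNReal.ofReal_lt_ofReal_iff'.1 this).1.le

lemma cpt {n : ℕ → ℕ} {k0 : ℕ} {a : ℕ → ℕ → ℕ} (h : ∀ N, ∀ j < N, a N j ≤ n j) :
    ∃ M : ℕ → ℕ, ∀ N, a N ∈ Set.pi univ (fun j => Set.Iic (M j)) := by
  refine ⟨fun j => n j + ∑ N ∈ Finset.range (j+1), a N j, fun N j _ => ?_⟩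
  rw [mem_Iic]
  by_cases hj : j < N
  · exact (h N j hj).trans (Nat.le_add_right _ _)
  · have := Finset.single_le_sum (s := Finset.range (j+1)) (f := fun N => a N j)
      (fun _ _ => Nat.zero_le _) (Finset.mem_range.2 (by omega : N < j + 1))
    exact le_trans this (Nat.le_add_left _ _)

lemma para {d : ℕ} (hd : 0 < d) {ρ ε s : ℝ} (hρ : 0 < ρ) (hρ1 : ρ < 1/2) (hε : ε < d)
    {E : Set (Euc d)} (hE : MeasurableSet E) (hEc : E ⊆ unitCube d) (hs : (d:ℝ) - ε ≤ s)
    (hcon : ENNReal.ofReal (1 - ρ) ≤ dyadicContent s E) :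
    ∃ (f : (ℕ → ℕ) → Euc d) (n : ℕ → ℕ) (X : ℕ → Set (ℕ → ℕ)), Continuous f ∧ range f = E ∧
      (∀ N, ENNReal.ofReal (1 - 2 * ρ) <
        hc cell (ENNReal.ofReal ((2:ℝ) ^ (-((d:ℝ) - ε)))) (f '' X N)) ∧
      ∀ N, ∀ j < N, ∀ a ∈ X N, a j ≤ n j := by
  have h1 : ENNReal.ofReal (1 - 2 * ρ) <
      hc cell (ENNReal.ofReal ((2:ℝ) ^ (-((d:ℝ) - ε)))) E := by
    refine lt_of_lt_of_le ?_ (hcon.trans (content_le (by linarith) hs hEc hd))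
    rw [ENNReal.ofReal_lt_ofReal_iff (by linarith)]; linarith
  have han : AnalyticSet E := hE.analyticSet
  rw [AnalyticSet] at han
  rcases han with h0 | ⟨f, hf, hfE⟩
  · rw [h0, hc_empty] at h1
    exact absurd h1 (not_lt.2 zero_le)
  · rw [← hfE] at h1
    obtain ⟨n, X, hX, hn⟩ := shrink cell_nested _ f ENNReal.ofReal_ne_top h1
    exact ⟨f, n, X, hf, hfE, hX, hn⟩

/-- The genuine theorem, with the fixed nondegenerate interval `[1/8, 1/4]`. -/
theorem genuine (d : ℕ) (hd : 2 ≤ d) :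
    ∃ ρ ε : ℝ, ρ ∈ Ioo (0:ℝ) 1 ∧ ε ∈ Ioo (0:ℝ) 1 ∧
      ∀ E F : Set (Euc d), MeasurableSet E → MeasurableSet F →
        E ⊆ unitCube d → F ⊆ unitCube d →
        ∀ s : ℝ, (d : ℝ) - ε ≤ s →
        ENNReal.ofReal (1 - ρ) ≤ dyadicContent s E →
        ENNReal.ofReal (1 - ρ) ≤ dyadicContent s F →
        Icc (1/8:ℝ) (1/4) ⊆ distSet E F := by
  obtain ⟨k0, ρ, ε, hρ, hρ1, hε, hε1, H⟩ := core hd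
  have hd2 : (2:ℝ) ≤ d := by exact_mod_cast hd
  refine ⟨ρ, ε, ⟨hρ, by linarith⟩, ⟨hε, by linarith⟩, ?_⟩
  intro E F hE hF hEc hFc s hs hcE hcF t ht
  obtain ⟨f, n, X, hf, hfE, hX, hn⟩ := para (by omega) hρ hρ1 (by linarith) hE hEc hs hcE
  obtain ⟨g, n', X', hg, hgF, hX', hn'⟩ := para (by omega) hρ hρ1 (by linarith) hF hFc hs hcF
  have key : ∀ N, ∃ a ∈ X N, ∃ b ∈ X' N, |dist (f a) (g b) - t| ≤ 2 * (1/2)^(N + k0) := by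
    intro N
    have hXE : f '' X N ⊆ unitCube d := by
      refine Subset.trans ?_ hEc; rw [← hfE]; exact image_subset_range _ _
    have hXF : g '' X' N ⊆ unitCube d := by
      refine Subset.trans ?_ hFc; rw [← hgF]; exact image_subset_range _ _
    obtain ⟨S, w, hS, hSys, hSm⟩ := mkSys (N + k0) hXE (hX N)
    obtain ⟨S', w', hS', hSys', hSm'⟩ := mkSys (N + k0) hXF (hX' N)
    obtain ⟨p, hp, p', hp', hpp⟩ := H (N + k0) (by omega) S S' w w' hSys hSys' hSm hSm' t ht.1 ht.2
    obtain ⟨a, ha, rfl⟩ := hS p hp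
    obtain ⟨b, hb, rfl⟩ := hS' p' hp'
    exact ⟨a, ha, b, hb, hpp⟩
  choose a ha b hb hab using key
  obtain ⟨M, hM⟩ := cpt (k0 := k0) (fun N j hj => hn N j hj (a N) (ha N))
  obtain ⟨M', hM'⟩ := cpt (k0 := k0) (fun N j hj => hn' N j hj (b N) (hb N))
  have hK : ∀ M : ℕ → ℕ, IsCompact (Set.pi univ (fun j => Set.Iic (M j))) := fun M =>
    isCompact_univ_pi fun j => (Set.finite_Iic _).isCompact
  obtain ⟨z, _, ψ, hψ, hlim⟩ := ((hK M).prod (hK M')).tendsto_subseq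
    (x := fun N => (a N, b N)) (fun N => ⟨hM N, hM' N⟩)
  have hc : Continuous (fun z : (ℕ → ℕ) × (ℕ → ℕ) => |dist (f z.1) (g z.2) - t|) := by fun_prop
  have hl1 := (hc.tendsto z).comp hlim
  have hl2 : Tendsto (fun N : ℕ => 2 * (1/2:ℝ)^(ψ N + k0)) atTop (𝓝 0) := by
    have h0 := ((tendsto_pow_atTop_nhds_zero_of_lt_one (r := (1/2:ℝ)) (by norm_num)
      (by norm_num)).comp ((tendsto_add_atTop_nat k0).comp hψ.tendsto_atTop)).const_mul 2
    simpa [Function.comp_def] using h0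
  have hle : |dist (f z.1) (g z.2) - t| ≤ 0 :=
    le_of_tendsto_of_tendsto' hl1 hl2 (fun N => hab (ψ N))
  have h0 : dist (f z.1) (g z.2) = t := by
    have := abs_nonpos_iff.1 hle; linarith
  exact ⟨f z.1, hfE ▸ mem_range_self _, g z.2, hgF ▸ mem_range_self _, h0⟩

end DistPf

/-- Theorem 1.2(a): for `d ≥ 2` there are dimensional constants
`ā_d, b̄_d, ρ_d, ε̄_d ∈ (0,1)` such that for all Borel `E, F ⊆ [0,1]^d` and all
`s ≥ d - ε̄_d`, if `min{H^s_∞(E), H^s_∞(F)} ≥ 1 - ρ_d` then `Δ(E,F) ⊇ [ā_d, b̄_d]`. -/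
theorem statement1 (d : ℕ) (hd : 2 ≤ d) :
    ∃ a b ρ ε : ℝ, a ∈ Ioo (0:ℝ) 1 ∧ b ∈ Ioo (0:ℝ) 1 ∧ ρ ∈ Ioo (0:ℝ) 1 ∧ ε ∈ Ioo (0:ℝ) 1 ∧
      ∀ E F : Set (Euc d), MeasurableSet E → MeasurableSet F →
        E ⊆ unitCube d → F ⊆ unitCube d →
        ∀ s : ℝ, (d : ℝ) - ε ≤ s →
        ENNReal.ofReal (1 - ρ) ≤ dyadicContent s E →
        ENNReal.ofReal (1 - ρ) ≤ dyadicContent s F →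
        Icc a b ⊆ distSet E F := by
  obtain ⟨ρ, ε, hρ, hε, h⟩ := DistPf.genuine d hd
  exact ⟨1/8, 1/4, ρ, ε, by constructor <;> norm_num, by constructor <;> norm_num, hρ, hε, h⟩
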